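/- Let (ρ, u) be a smooth solution of (QNS_ε) on (0,T) × T^d, let c ∈ (0, μ), and set v = u + c ∇(φ_ε(ρ)), λ̃ = (μ − c)/μ, κ̃² = c² − 2νc + κ². Then for every t ∈ (0,T): (d/dt) ∫_{T^d} [ ρ|v|²/2 + ρ^γ/(γ−1) + λ̃ f_ε(ρ) + 2κ̃² |h_ε'(ρ)∇√ρ|² ] dx + c ∫ h_ε(ρ)|Av|² + (2ν−c) ∫ ( h_ε(ρ)|Dv|² + g_ε(ρ)(div v)² ) + ∫ p̃_ε(ρ)|v|² + cγ ∫ h_ε'(ρ)|∇ρ|² ρ^{γ−2} + c λ̃ ∫ h_ε'(ρ)|∇ρ|² f_ε''(ρ) + c κ̃² ∫ h_ε(ρ)|∇²(φ_ε(ρ))|² + c κ̃² ∫ g_ε(ρ)(Δ(φ_ε(ρ)))² = 0, all spatial integrals being over T^d. -/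

import Mathlib

/-! Write `φ = φ_ε(ρ)`, `w = ∇φ`, `D_t = ∂_t + u · ∇` and `S(M) = div(h_ε(ρ) M) + ∇(g_ε(ρ) tr M)`.
The continuity equation gives `ρ D_t w = −S((∇u)ᵀ)`, and the capillarity force is `κ² S(∇²φ)`, so
the effective velocity `v = u + c w` satisfies
`ρ D_t v = S(2ν Du + κ² ∇²φ − c (∇u)ᵀ) − ∇(ρ^γ + p_ε(ρ)) − p̃_ε(ρ) u`.
Since `2 |h_ε'(ρ) ∇√ρ|² = ρ |w|² / 2`, the capillary energy is a second kinetic energy. Test the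
equation of `v` with `v` and that of `w` with `κ̃² w`: integrating `S` by parts and writing
`∇u = ∇v − c ∇²φ`, the products `∇²φ : ∇v` cancel exactly because `κ̃² = c² − 2νc + κ²`, and only
squares remain. Finally `∇p_ε(ρ) = μ p̃_ε(ρ) w`, so that
`p̃_ε(ρ) u · v = p̃_ε(ρ) |v|² − (c/μ) v · ∇p_ε(ρ)`, which turns the weight `1` of the energy `f_ε`
into `λ̃ = 1 − c/μ`. -/

open MeasureTheory Real

noncomputable section

/-- Partial derivative of a scalar field in the coordinate direction `i`. -/
def pd {d : ℕ} (i : Fin d) (f : (Fin d → ℝ) → ℝ) (x : Fin d → ℝ) : ℝ :=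
  fderiv ℝ f x (Pi.single i 1)

/-- Gradient of a scalar field. -/
def grad {d : ℕ} (f : (Fin d → ℝ) → ℝ) (x : Fin d → ℝ) : Fin d → ℝ :=
  fun i => pd i f x

/-- Divergence of a vector field. -/
def dvg {d : ℕ} (u : (Fin d → ℝ) → (Fin d → ℝ)) (x : Fin d → ℝ) : ℝ :=
  ∑ i, pd i (fun y => u y i) x

/-- Row-wise divergence of a matrix field: `(dvgM M x) i = ∑ j, ∂_j M_{ij}`. -/
def dvgM {d : ℕ} (M : (Fin d → ℝ) → Fin d → Fin d → ℝ) (x : Fin d → ℝ) : Fin d → ℝ :=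
  fun i => ∑ j, pd j (fun y => M y i j) x

/-- Hessian of a scalar field. -/
def hess {d : ℕ} (f : (Fin d → ℝ) → ℝ) (x : Fin d → ℝ) : Fin d → Fin d → ℝ :=
  fun i j => pd i (fun y => pd j f y) x

/-- Laplacian of a scalar field. -/
def lap {d : ℕ} (f : (Fin d → ℝ) → ℝ) (x : Fin d → ℝ) : ℝ :=
  ∑ i, pd i (fun y => pd i f y) x

/-- Jacobian matrix of a vector field: `(jac u x) i j = ∂_j u_i`. -/
def jac {d : ℕ} (u : (Fin d → ℝ) → (Fin d → ℝ)) (x : Fin d → ℝ) : Fin d → Fin d → ℝ :=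
  fun i j => pd j (fun y => u y i) x

/-- Symmetric part of the gradient of a vector field, `Du = (∇u + (∇u)ᵀ)/2`. -/
def symD {d : ℕ} (u : (Fin d → ℝ) → (Fin d → ℝ)) (x : Fin d → ℝ) : Fin d → Fin d → ℝ :=
  fun i j => (jac u x i j + jac u x j i) / 2

/-- Antisymmetric part of the gradient of a vector field, `Au = (∇u − (∇u)ᵀ)/2`. -/
def antiD {d : ℕ} (u : (Fin d → ℝ) → (Fin d → ℝ)) (x : Fin d → ℝ) : Fin d → Fin d → ℝ :=
  fun i j => (jac u x i j - jac u x j i) / 2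

/-- Tensor product of two vectors: `(a ⊗ b)_{ij} = a_i b_j`. -/
def tens {d : ℕ} (a b : Fin d → ℝ) : Fin d → Fin d → ℝ := fun i j => a i * b j

/-- ℤ^d-periodicity: a function of this kind descends to the torus `T^d = ℝ^d/ℤ^d`. -/
def SpacePeriodic {d : ℕ} {E : Type*} (f : (Fin d → ℝ) → E) : Prop :=
  ∀ x : Fin d → ℝ, ∀ n : Fin d → ℤ, f (x + fun i => (n i : ℝ)) = f x

/-- Fundamental domain of the torus `T^d = ℝ^d/ℤ^d` (with its probability Lebesgue measure). -/
def unitBox (d : ℕ) : Set (Fin d → ℝ) := Set.Icc 0 1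

/-- The approximating viscosity coefficient `h_ε(r) = r + ε r^{7/8} + ε r^γ`. -/
def hfun (ε γ r : ℝ) : ℝ := r + ε * r ^ ((7 : ℝ) / 8) + ε * r ^ γ

/-- `g_ε(r) = r h_ε'(r) − h_ε(r)`. -/
def gfun (ε γ r : ℝ) : ℝ := r * deriv (hfun ε γ) r - hfun ε γ r

/-- `λ(ε) = e^{−1/ε⁴}`. -/
def lamfun (ε : ℝ) : ℝ := Real.exp (-1 / ε ^ 4)

/-- The damping coefficient `p̃_ε(r) = λ(ε)(r^{1/ε²} + r^{−1/ε²})`. -/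
def ptil (ε r : ℝ) : ℝ := lamfun ε * (r ^ (1 / ε ^ 2) + r ^ (-(1 / ε ^ 2)))

/-- `μ = ν − √(ν² − κ²)`. -/
def muof (ν κ : ℝ) : ℝ := ν - Real.sqrt (ν ^ 2 - κ ^ 2)

/-- `p_ε` is an antiderivative on `(0,∞)` of `r ↦ μ p̃_ε(r) h_ε'(r) / r`. -/
def IsPeps (ε γ ν κ : ℝ) (P : ℝ → ℝ) : Prop :=
  ∀ r : ℝ, 0 < r → HasDerivAt P (muof ν κ * ptil ε r * deriv (hfun ε γ) r / r) r

/-- `φ_ε` is a smooth function on `(0,∞)` with `r φ_ε'(r) = h_ε'(r)`. -/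
def IsPhieps (ε γ : ℝ) (Φ : ℝ → ℝ) : Prop :=
  ContDiffOn ℝ (⊤ : ℕ∞) Φ (Set.Ioi 0) ∧ ∀ r : ℝ, 0 < r → r * deriv Φ r = deriv (hfun ε γ) r

/-- `f_ε` satisfies `r f_ε'(r) − f_ε(r) = p_ε(r)` on `(0,∞)`. -/
def IsFeps (P F : ℝ → ℝ) : Prop :=
  (∀ r : ℝ, 0 < r → DifferentiableAt ℝ F r) ∧
  ∀ r : ℝ, 0 < r → r * deriv F r - F r = P r

/-- The vector field `∇( h_ε'(ρ) div(h_ε'(ρ) ∇√ρ) / √ρ )`; the capillarity term of (QNS_ε) is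
`2 κ² ρ` times this field. -/
def Kvec {d : ℕ} (ε γ : ℝ) (ρ : (Fin d → ℝ) → ℝ) (x : Fin d → ℝ) : Fin d → ℝ :=
  grad (fun y => deriv (hfun ε γ) (ρ y) *
      dvg (fun z => deriv (hfun ε γ) (ρ z) • grad (fun w => Real.sqrt (ρ w)) z) y /
      Real.sqrt (ρ y)) x

/-- A smooth solution of the approximating system (QNS_ε) on `(0,T) × T^d`:
a pair of `C^∞` functions on `[0,T] × T^d` with `ρ > 0` everywhere, satisfying the continuity
equation and the momentum equation pointwise. -/
def IsQNSSol (d : ℕ) (ε γ ν κ T : ℝ) (P : ℝ → ℝ)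
    (ρ : ℝ → (Fin d → ℝ) → ℝ) (u : ℝ → (Fin d → ℝ) → (Fin d → ℝ)) : Prop :=
  ContDiffOn ℝ (⊤ : ℕ∞) (fun p : ℝ × (Fin d → ℝ) => ρ p.1 p.2) (Set.Icc 0 T ×ˢ Set.univ) ∧
  ContDiffOn ℝ (⊤ : ℕ∞) (fun p : ℝ × (Fin d → ℝ) => u p.1 p.2) (Set.Icc 0 T ×ˢ Set.univ) ∧
  (∀ t x, 0 < ρ t x) ∧
  (∀ t, SpacePeriodic (ρ t)) ∧
  (∀ t, SpacePeriodic (u t)) ∧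
  (∀ t ∈ Set.Ioo 0 T, ∀ x : Fin d → ℝ,
    deriv (fun s => ρ s x) t + dvg (fun y => ρ t y • u t y) x = 0) ∧
  (∀ t ∈ Set.Ioo 0 T, ∀ x : Fin d → ℝ, ∀ i : Fin d,
    deriv (fun s => ρ s x * u s x i) t
      + dvgM (fun y i' j => ρ t y * u t y i' * u t y j) x i
      + grad (fun y => ρ t y ^ γ + P (ρ t y)) x i
      + ptil ε (ρ t x) * u t x i
    = 2 * ν * dvgM (fun y i' j => hfun ε γ (ρ t y) * symD (u t) y i' j) x i
      + 2 * ν * grad (fun y => gfun ε γ (ρ t y) * dvg (u t) y) x i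
      + 2 * κ ^ 2 * ρ t x * Kvec ε γ (ρ t) x i)

open scoped ContDiff

section PartialDerivatives

variable {d : ℕ} {f g : (Fin d → ℝ) → ℝ} {x : Fin d → ℝ}

lemma pd_add (i : Fin d) (hf : DifferentiableAt ℝ f x) (hg : DifferentiableAt ℝ g x) :
    pd i (fun y => f y + g y) x = pd i f x + pd i g x := by
  simp only [pd, fderiv_fun_add hf hg, add_apply]

lemma pd_mul (i : Fin d) (hf : DifferentiableAt ℝ f x) (hg : DifferentiableAt ℝ g x) :
    pd i (fun y => f y * g y) x = f x * pd i g x + pd i f x * g x := by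
  simp [pd, fderiv_fun_mul hf hg, mul_comm]

lemma pd_const_mul (i : Fin d) (a : ℝ) (hf : DifferentiableAt ℝ f x) :
    pd i (fun y => a * f y) x = a * pd i f x := by
  simp [pd, fderiv_const_mul hf]

lemma pd_sum {ι : Type*} {s : Finset ι} {F : ι → (Fin d → ℝ) → ℝ} (i : Fin d)
    (hF : ∀ k ∈ s, DifferentiableAt ℝ (F k) x) :
    pd i (fun y => ∑ k ∈ s, F k y) x = ∑ k ∈ s, pd i (F k) x := by
  simp [pd, fderiv_fun_sum hF]

lemma pd_comp {G : ℝ → ℝ} (i : Fin d) (hG : DifferentiableAt ℝ G (f x))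
    (hf : DifferentiableAt ℝ f x) :
    pd i (fun y => G (f y)) x = deriv G (f x) * pd i f x := by
  have hcomp := (hG.hasDerivAt.comp_hasFDerivAt x hf.hasFDerivAt).fderiv
  simp only [Function.comp_def] at hcomp
  simp [pd, hcomp]

lemma pd_comm (i j : Fin d) (hf : ContDiffAt ℝ 2 f x) :
    pd i (fun y => pd j f y) x = pd j (fun y => pd i f y) x := by
  have hdiff : DifferentiableAt ℝ (fderiv ℝ f) x :=
    (hf.fderiv_right (m := 1) le_rfl).differentiableAt one_ne_zero
  have hsymm : IsSymmSndFDerivAt ℝ f x := hf.isSymmSndFDerivAt (by simp)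
  have second (a b : Fin d) : pd a (fun y => pd b f y) x
      = fderiv ℝ (fderiv ℝ f) x (Pi.single a 1) (Pi.single b 1) := by
    unfold pd
    simp [fderiv_clm_apply hdiff (differentiableAt_const _)]
  rw [second, second, hsymm]

lemma pd_sum_sq {U : (Fin d → ℝ) → Fin d → ℝ} (i : Fin d) (hU : DifferentiableAt ℝ U x) :
    pd i (fun y => ∑ k, U y k ^ 2) x = 2 * ∑ k, U x k * pd i (fun y => U y k) x := by
  have hk : ∀ k, DifferentiableAt ℝ (fun y => U y k) x := differentiableAt_pi.1 hU
  simp only [pow_two]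
  rw [pd_sum i fun k _ => (hk k).fun_mul (hk k), Finset.mul_sum]
  exact Finset.sum_congr rfl fun k _ => by rw [pd_mul i (hk k) (hk k)]; ring

lemma dvg_smul {U : (Fin d → ℝ) → Fin d → ℝ} (hf : DifferentiableAt ℝ f x)
    (hU : DifferentiableAt ℝ U x) :
    dvg (fun y => f y • U y) x = f x * dvg U x + ∑ j, U x j * pd j f x := by
  simp only [dvg, Pi.smul_apply, smul_eq_mul, Finset.mul_sum, ← Finset.sum_add_distrib]
  exact Finset.sum_congr rfl fun j _ => by
    rw [pd_mul j hf (differentiableAt_pi.1 hU j)]; ring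

end PartialDerivatives

section Torus

variable {d : ℕ} {E : Type*} [NormedAddCommGroup E] [NormedSpace ℝ E]

/-- Smooth fields on the torus `ℝ^d/ℤ^d`, encoded as smooth periodic functions on `ℝ^d`. -/
structure SmoothPeriodic (f : (Fin d → ℝ) → E) : Prop where
  contDiff : ContDiff ℝ ∞ f
  periodic : SpacePeriodic f

variable {f : (Fin d → ℝ) → ℝ}

lemma SmoothPeriodic.differentiable {f : (Fin d → ℝ) → E} (hf : SmoothPeriodic f) :
    Differentiable ℝ f :=
  hf.contDiff.differentiable (by simp)

lemma SmoothPeriodic.continuous {f : (Fin d → ℝ) → E} (hf : SmoothPeriodic f) : Continuous f :=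
  hf.contDiff.continuous

lemma SmoothPeriodic.const (a : E) : SmoothPeriodic fun _ : Fin d → ℝ => a :=
  ⟨contDiff_const, fun _ _ => rfl⟩

lemma SmoothPeriodic.add {f g : (Fin d → ℝ) → E} (hf : SmoothPeriodic f) (hg : SmoothPeriodic g) :
    SmoothPeriodic fun x => f x + g x :=
  ⟨hf.contDiff.add hg.contDiff, fun x n => by rw [hf.periodic, hg.periodic]⟩

lemma SmoothPeriodic.smul {g : (Fin d → ℝ) → E} (hf : SmoothPeriodic f) (hg : SmoothPeriodic g) :
    SmoothPeriodic fun x => f x • g x :=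
  ⟨hf.contDiff.smul hg.contDiff, fun x n => by rw [hf.periodic, hg.periodic]⟩

lemma SmoothPeriodic.sum {ι : Type*} {s : Finset ι} {F : ι → (Fin d → ℝ) → E}
    (hF : ∀ k ∈ s, SmoothPeriodic (F k)) : SmoothPeriodic fun x => ∑ k ∈ s, F k x :=
  ⟨ContDiff.sum fun k hk => (hF k hk).contDiff,
    fun x n => Finset.sum_congr rfl fun k hk => (hF k hk).periodic x n⟩

lemma SmoothPeriodic.comp {G : ℝ → ℝ} {s : Set ℝ} (hG : ContDiffOn ℝ ∞ G s)
    (hf : SmoothPeriodic f) (hs : ∀ x, f x ∈ s) : SmoothPeriodic fun x => G (f x) :=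
  ⟨hG.comp_contDiff hf.contDiff hs, fun x n => by rw [hf.periodic]⟩

lemma smoothPeriodic_pi {ι : Type*} [Fintype ι] {U : (Fin d → ℝ) → ι → E} :
    SmoothPeriodic U ↔ ∀ i, SmoothPeriodic fun x => U x i :=
  ⟨fun hU i => ⟨contDiff_pi.1 hU.contDiff i, fun x n => by rw [hU.periodic]⟩,
    fun hU => ⟨contDiff_pi.2 fun i => (hU i).contDiff,
      fun x n => funext fun i => (hU i).periodic x n⟩⟩

lemma SmoothPeriodic.apply {ι : Type*} [Fintype ι] {U : (Fin d → ℝ) → ι → E}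
    (hU : SmoothPeriodic U) (i : ι) : SmoothPeriodic fun x => U x i :=
  smoothPeriodic_pi.1 hU i

lemma SmoothPeriodic.pd (hf : SmoothPeriodic f) (i : Fin d) :
    SmoothPeriodic fun x => _root_.pd i f x where
  contDiff := (hf.contDiff.fderiv_right (m := ∞) (by simp)).clm_apply contDiff_const
  periodic x n := by
    unfold _root_.pd
    simp only [← fderiv_comp_add_right, hf.periodic _ n]

lemma SmoothPeriodic.grad (hf : SmoothPeriodic f) : SmoothPeriodic (grad f) :=
  smoothPeriodic_pi.2 hf.pd

lemma SmoothPeriodic.jac {U : (Fin d → ℝ) → Fin d → ℝ} (hU : SmoothPeriodic U) :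
    SmoothPeriodic (jac U) :=
  smoothPeriodic_pi.2 fun i => smoothPeriodic_pi.2 fun j => (hU.apply i).pd j

lemma SmoothPeriodic.dvg {U : (Fin d → ℝ) → Fin d → ℝ} (hU : SmoothPeriodic U) :
    SmoothPeriodic (dvg U) :=
  .sum fun i _ => (hU.apply i).pd i

end Torus

section IntegrationByParts

variable {d : ℕ}

lemma integrableOn_unitBox {E : Type*} [NormedAddCommGroup E] {f : (Fin d → ℝ) → E}
    (hf : Continuous f) : IntegrableOn f (unitBox d) :=
  hf.continuousOn.integrableOn_compact isCompact_Icc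

lemma integral_dvg_eq_zero {U : (Fin d → ℝ) → Fin d → ℝ} (hU : SmoothPeriodic U) :
    ∫ x in unitBox d, dvg U x = 0 := by
  cases d with
  | zero => simp [dvg]
  | succ n =>
    have hdvg (x : Fin (n + 1) → ℝ) :
        ∑ i, fderiv ℝ U x (Pi.single i 1) i = dvg U x :=
      Finset.sum_congr rfl fun i _ => by
        simp only [pd, fderiv_pi fun i => (hU.apply i).differentiable x,
          ContinuousLinearMap.pi_apply]
    have hface (i : Fin (n + 1)) (y : Fin n → ℝ) :
        U (i.insertNth 1 y) i = U (i.insertNth 0 y) i := by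
      rw [← hU.periodic (i.insertNth 0 y) (Pi.single i 1)]
      congr 1
      ext k
      cases k using Fin.succAboveCases i <;> simp [Fin.succAbove_ne]
    have hdiv := integral_divergence_of_hasFDerivAt_off_countable (0 : Fin (n + 1) → ℝ) 1
      (fun _ => zero_le_one) U (fderiv ℝ U) ∅ Set.countable_empty hU.continuous.continuousOn
      (fun x _ => (hU.differentiable x).hasFDerivAt)
      (by simp only [hdvg]; exact integrableOn_unitBox hU.dvg.continuous)
    simpa [hdvg, hface, unitBox] using hdiv

lemma integral_dot_grad {V : (Fin d → ℝ) → Fin d → ℝ} {s : (Fin d → ℝ) → ℝ}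
    (hV : SmoothPeriodic V) (hs : SmoothPeriodic s) :
    ∫ x in unitBox d, ∑ i, V x i * grad s x i = -∫ x in unitBox d, s x * dvg V x := by
  have hdvg : (fun x => ∑ i, V x i * grad s x i)
      = fun x => dvg (fun y => s y • V y) x - s x * dvg V x := by
    ext x
    rw [dvg_smul (hs.differentiable x) (hV.differentiable x)]
    exact (add_sub_cancel_left _ _).symm
  rw [hdvg, integral_sub (integrableOn_unitBox (hs.smul hV).dvg.continuous)
    (integrableOn_unitBox (hs.continuous.fun_mul hV.dvg.continuous)),
    integral_dvg_eq_zero (hs.smul hV), zero_sub]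

lemma integral_dot_dvgM {V : (Fin d → ℝ) → Fin d → ℝ} {S : (Fin d → ℝ) → Fin d → Fin d → ℝ}
    (hV : SmoothPeriodic V) (hS : SmoothPeriodic S) :
    ∫ x in unitBox d, ∑ i, V x i * dvgM S x i
      = -∫ x in unitBox d, ∑ i, ∑ j, S x i j * jac V x i j := by
  have hrow (i : Fin d) : ∫ x in unitBox d, V x i * dvgM S x i
      = -∫ x in unitBox d, ∑ j, S x i j * jac V x i j :=
    (neg_eq_iff_eq_neg.2 (integral_dot_grad (hS.apply i) (hV.apply i))).symm
  have hSc (i j : Fin d) : Continuous fun x => S x i j := ((hS.apply i).apply j).continuous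
  have hJc (i j : Fin d) : Continuous fun x => jac V x i j :=
    ((hV.jac.apply i).apply j).continuous
  have hVc (i : Fin d) : Continuous fun x => V x i := (hV.apply i).continuous
  have hdc (i : Fin d) : Continuous fun x => dvgM S x i := (hS.apply i).dvg.continuous
  rw [integral_finsetSum _ fun i _ => integrableOn_unitBox (by fun_prop),
    integral_finsetSum _ fun i _ => integrableOn_unitBox (by fun_prop),
    ← Finset.sum_neg_distrib]
  exact Finset.sum_congr rfl fun i _ => hrow i

end IntegrationByParts

section ViscousForce

variable {d : ℕ} {η ζ : (Fin d → ℝ) → ℝ} {M N : (Fin d → ℝ) → Fin d → Fin d → ℝ}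

/-- The viscous force `div(η M) + ∇(ζ tr M)` of a matrix field `M`, with shear viscosity `η` and
bulk viscosity `ζ`. For `M = Du` it is the viscous term of a compressible fluid; with `M = ∇²φ` it
is a capillarity force. -/
def viscousForce (η ζ : (Fin d → ℝ) → ℝ) (M : (Fin d → ℝ) → Fin d → Fin d → ℝ)
    (x : Fin d → ℝ) : Fin d → ℝ :=
  dvgM (fun y i j => η y * M y i j) x + grad (fun y => ζ y * ∑ k, M y k k) x

/-- The density `η M : ∇V + ζ (tr M) (div V)` of the power dissipated by `viscousForce η ζ M` in
the velocity field `V`. -/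
def viscousPower (η ζ : (Fin d → ℝ) → ℝ) (M : (Fin d → ℝ) → Fin d → Fin d → ℝ)
    (V : (Fin d → ℝ) → Fin d → ℝ) (x : Fin d → ℝ) : ℝ :=
  η x * ∑ i, ∑ j, M x i j * jac V x i j + ζ x * (∑ k, M x k k) * dvg V x

lemma viscousForce_add {x : Fin d → ℝ} (hη : DifferentiableAt ℝ η x)
    (hζ : DifferentiableAt ℝ ζ x) (hM : DifferentiableAt ℝ M x) (hN : DifferentiableAt ℝ N x) :
    viscousForce η ζ (fun y => M y + N y) x = viscousForce η ζ M x + viscousForce η ζ N x := by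
  ext i
  simp (disch := fun_prop) only [viscousForce, dvgM, grad, Pi.add_apply, mul_add,
    Finset.sum_add_distrib, pd_add]
  ring

lemma viscousForce_const_smul {x : Fin d → ℝ} (a : ℝ) (hη : DifferentiableAt ℝ η x)
    (hζ : DifferentiableAt ℝ ζ x) (hM : DifferentiableAt ℝ M x) :
    viscousForce η ζ (fun y => a • M y) x = a • viscousForce η ζ M x := by
  ext i
  simp (disch := fun_prop) only [viscousForce, dvgM, grad, Pi.add_apply, Pi.smul_apply, smul_eq_mul,
    mul_left_comm _ a, ← Finset.mul_sum, pd_const_mul, mul_add]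

lemma SmoothPeriodic.viscousForce (hη : SmoothPeriodic η) (hζ : SmoothPeriodic ζ)
    (hM : SmoothPeriodic M) : SmoothPeriodic (viscousForce η ζ M) :=
  .add (smoothPeriodic_pi.2 fun i => (hη.smul (hM.apply i)).dvg)
    (hζ.smul (.sum fun k _ => (hM.apply k).apply k)).grad

lemma SmoothPeriodic.viscousPower (hη : SmoothPeriodic η) (hζ : SmoothPeriodic ζ)
    (hM : SmoothPeriodic M) {V : (Fin d → ℝ) → Fin d → ℝ} (hV : SmoothPeriodic V) :
    SmoothPeriodic (viscousPower η ζ M V) :=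
  .add (hη.smul (.sum fun i _ => .sum fun j _ =>
      ((hM.apply i).apply j).smul ((hV.jac.apply i).apply j)))
    ((hζ.smul (.sum fun k _ => (hM.apply k).apply k)).smul hV.dvg)

lemma integral_dot_viscousForce (hη : SmoothPeriodic η) (hζ : SmoothPeriodic ζ)
    (hM : SmoothPeriodic M) {V : (Fin d → ℝ) → Fin d → ℝ} (hV : SmoothPeriodic V) :
    ∫ x in unitBox d, ∑ i, V x i * viscousForce η ζ M x i
      = -∫ x in unitBox d, viscousPower η ζ M V x := by
  have hstress : SmoothPeriodic fun y => η y • M y := hη.smul hM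
  have htrace : SmoothPeriodic fun y => ζ y * ∑ k, M y k k :=
    hζ.smul (.sum fun k _ => (hM.apply k).apply k)
  have hVc := hV.continuous
  have hηc := hη.continuous
  have hMc := hM.continuous
  have htc := htrace.continuous
  have hJc := hV.jac.continuous
  have hdc := hV.dvg.continuous
  have hf1 : Continuous (dvgM fun y => η y • M y) :=
    continuous_pi fun i => (hstress.apply i).dvg.continuous
  have hf2 := htrace.grad.continuous
  calc ∫ x in unitBox d, ∑ i, V x i * viscousForce η ζ M x i
      = ∫ x in unitBox d, (∑ i, V x i * dvgM (fun y => η y • M y) x i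
          + ∑ i, V x i * grad (fun y => ζ y * ∑ k, M y k k) x i) := by
        simp only [← Finset.sum_add_distrib, ← mul_add]
        rfl
    _ = -∫ x in unitBox d, (∑ i, ∑ j, (η x • M x) i j * jac V x i j
          + (ζ x * ∑ k, M x k k) * dvg V x) := by
        rw [integral_add, integral_add, integral_dot_dvgM hV hstress,
          integral_dot_grad hV htrace, neg_add]
        all_goals refine integrableOn_unitBox ?_; fun_prop
    _ = -∫ x in unitBox d, viscousPower η ζ M V x := by
        simp only [viscousPower, Pi.smul_apply, smul_eq_mul, mul_assoc, Finset.mul_sum]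

end ViscousForce

section DensityDependentViscosity

variable {d : ℕ} {h Φ : ℝ → ℝ} {R : (Fin d → ℝ) → ℝ} {U : (Fin d → ℝ) → Fin d → ℝ}

/-- The Legendre transform `r G'(r) − G(r)` of `G`, parametrised by `r` instead of the slope
`G'(r)`. It turns a shear viscosity into the bulk viscosity `g_ε`, and an internal energy density
into its pressure. -/
def legendreDual (G : ℝ → ℝ) (r : ℝ) : ℝ := r * deriv G r - G r

/-- `Φ` is a potential of the viscosity `h`: it is smooth and `r Φ'(r) = h'(r)` for `r > 0`, so
that `ρ ∇Φ(ρ) = ∇h(ρ)`. -/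
def IsViscousPotential (h Φ : ℝ → ℝ) : Prop :=
  ContDiffOn ℝ ∞ Φ (Set.Ioi 0) ∧ ∀ r, 0 < r → r * deriv Φ r = deriv h r

/-- The generalized Bohm potential `h'(R) div(h'(R) ∇√R) / √R`, whose gradient is the capillarity
force per unit mass of (QNS_ε). -/
def bohmPotential (h : ℝ → ℝ) (R : (Fin d → ℝ) → ℝ) (x : Fin d → ℝ) : ℝ :=
  deriv h (R x) * dvg (fun y => deriv h (R y) • grad (fun z => √(R z)) y) x / √(R x)

lemma differentiableAt_of_contDiffOn_Ioi {G : ℝ → ℝ} (hG : ContDiffOn ℝ ∞ G (Set.Ioi 0)) {r : ℝ}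
    (hr : 0 < r) : DifferentiableAt ℝ G r :=
  (hG.contDiffAt (Ioi_mem_nhds hr)).differentiableAt (by simp)

lemma contDiffOn_deriv_Ioi {G : ℝ → ℝ} (hG : ContDiffOn ℝ ∞ G (Set.Ioi 0)) :
    ContDiffOn ℝ ∞ (deriv G) (Set.Ioi 0) :=
  hG.deriv_of_isOpen isOpen_Ioi (by simp)

lemma contDiffOn_legendreDual {G : ℝ → ℝ} (hG : ContDiffOn ℝ ∞ G (Set.Ioi 0)) :
    ContDiffOn ℝ ∞ (legendreDual G) (Set.Ioi 0) :=
  (contDiffOn_id.mul (contDiffOn_deriv_Ioi hG)).sub hG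

lemma deriv_legendreDual {G : ℝ → ℝ} (hG : ContDiffOn ℝ ∞ G (Set.Ioi 0)) {r : ℝ} (hr : 0 < r) :
    deriv (legendreDual G) r = r * deriv (deriv G) r := by
  have hd := (differentiableAt_of_contDiffOn_Ioi hG hr).hasDerivAt
  have hdd := (differentiableAt_of_contDiffOn_Ioi (contDiffOn_deriv_Ioi hG) hr).hasDerivAt
  exact (((hasDerivAt_id r).mul hdd).sub hd).deriv.trans (by simp)

lemma mul_pd_viscousPotential (hΦ : IsViscousPotential h Φ) (hh : ContDiffOn ℝ ∞ h (Set.Ioi 0))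
    {x : Fin d → ℝ} (hR : DifferentiableAt ℝ R x) (hpos : 0 < R x) (i : Fin d) :
    R x * pd i (fun y => Φ (R y)) x = pd i (fun y => h (R y)) x := by
  rw [pd_comp i (differentiableAt_of_contDiffOn_Ioi hΦ.1 hpos) hR,
    pd_comp i (differentiableAt_of_contDiffOn_Ioi hh hpos) hR, ← hΦ.2 _ hpos, mul_assoc]

/-- The terms in `∇ div U` and `(div U) ∇ρ` are collected using `h + g = ρ h'` and
`∇g(ρ) = ρ ∇h'(ρ)`. -/
lemma viscousForce_jac_transpose (hh : ContDiffOn ℝ ∞ h (Set.Ioi 0)) (hR : SmoothPeriodic R)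
    (hpos : ∀ x, 0 < R x) (hU : SmoothPeriodic U) (x : Fin d → ℝ) (i : Fin d) :
    viscousForce (fun y => h (R y)) (fun y => legendreDual h (R y)) (fun y i j => jac U y j i) x i
      = R x * pd i (fun y => deriv h (R y) * dvg U y) x
        + ∑ j, pd j (fun y => h (R y)) x * pd i (fun y => U y j) x := by
  have hη := (SmoothPeriodic.comp hh hR hpos).differentiable x
  have hh' := contDiffOn_deriv_Ioi hh
  have hg := contDiffOn_legendreDual hh
  have hdiv := hU.dvg.differentiable x
  have hdiv_eq : pd i (dvg U) x = ∑ j, pd j (fun y => pd i (fun z => U z j) y) x :=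
    (pd_sum i fun j _ => ((hU.apply j).pd j).differentiable x).trans <|
      Finset.sum_congr rfl fun j _ =>
        pd_comm i j ((hU.apply j).contDiff.contDiffAt.of_le ENat.LEInfty.out)
  have hshear (j : Fin d) : pd j (fun y => h (R y) * pd i (fun z => U z j) y) x
      = h (R x) * pd j (fun y => pd i (fun z => U z j) y) x
        + pd j (fun y => h (R y)) x * pd i (fun z => U z j) x :=
    pd_mul j hη (((hU.apply j).pd i).differentiable x)
  have hbulk : pd i (fun y => legendreDual h (R y)) x = R x * pd i (fun y => deriv h (R y)) x := by
    rw [pd_comp i (differentiableAt_of_contDiffOn_Ioi hg (hpos x)) (hR.differentiable x),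
      pd_comp i (differentiableAt_of_contDiffOn_Ioi hh' (hpos x)) (hR.differentiable x),
      deriv_legendreDual hh (hpos x), mul_assoc]
  change ∑ j, pd j (fun y => h (R y) * pd i (fun z => U z j) y) x
    + pd i (fun y => legendreDual h (R y) * dvg U y) x = _
  rw [pd_mul i ((SmoothPeriodic.comp hg hR hpos).differentiable x) hdiv, hbulk,
    pd_mul i ((SmoothPeriodic.comp hh' hR hpos).differentiable x) hdiv, hdiv_eq]
  simp only [hshear, Finset.sum_add_distrib, ← Finset.mul_sum, legendreDual]
  ring

lemma deriv_mul_pd_sqrt (hΦ : IsViscousPotential h Φ) {x : Fin d → ℝ}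
    (hR : DifferentiableAt ℝ R x) (hpos : 0 < R x) (i : Fin d) :
    deriv h (R x) * pd i (fun y => √(R y)) x = √(R x) / 2 * pd i (fun y => Φ (R y)) x := by
  have hsqrt : √(R x) ≠ 0 := (sqrt_pos.2 hpos).ne'
  rw [pd_comp i (hasDerivAt_sqrt hpos.ne').differentiableAt hR,
    pd_comp i (differentiableAt_of_contDiffOn_Ioi hΦ.1 hpos) hR, ← hΦ.2 _ hpos,
    (hasDerivAt_sqrt hpos.ne').deriv]
  nth_rw 1 [← mul_self_sqrt hpos.le]
  field_simp

lemma two_mul_sum_sq_deriv_mul_grad_sqrt (hΦ : IsViscousPotential h Φ) {x : Fin d → ℝ}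
    (hR : DifferentiableAt ℝ R x) (hpos : 0 < R x) :
    2 * ∑ i, (deriv h (R x) * grad (fun y => √(R y)) x i) ^ 2
      = R x * ((∑ i, grad (fun y => Φ (R y)) x i ^ 2) / 2) := by
  simp only [grad, deriv_mul_pd_sqrt hΦ hR hpos, mul_pow, ← Finset.mul_sum, div_pow,
    sq_sqrt hpos.le]
  ring

lemma bohmPotential_eq (hΦ : IsViscousPotential h Φ) (hR : SmoothPeriodic R)
    (hpos : ∀ x, 0 < R x) (x : Fin d → ℝ) :
    bohmPotential h R x = deriv h (R x) * lap (fun y => Φ (R y)) x / 2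
      + (∑ j, pd j (fun y => Φ (R y)) x ^ 2) / 4 := by
  have hsqrt : √(R x) ≠ 0 := (sqrt_pos.2 (hpos x)).ne'
  have hs : DifferentiableAt ℝ (fun y => √(R y)) x :=
    (hR.differentiable x).sqrt (hpos x).ne'
  have hflux : (fun y => deriv h (R y) • grad (fun z => √(R z)) y)
      = fun y => (2⁻¹ * √(R y)) • grad (fun z => Φ (R z)) y := by
    ext y i
    have := deriv_mul_pd_sqrt hΦ (hR.differentiable y) (hpos y) i
    simp only [grad, Pi.smul_apply, smul_eq_mul]
    linarith
  have hdiv : dvg (grad fun y => Φ (R y)) x = lap (fun y => Φ (R y)) x := rfl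
  have hcross : deriv h (R x) * ∑ j, pd j (fun y => Φ (R y)) x * pd j (fun y => √(R y)) x
      = √(R x) / 2 * ∑ j, pd j (fun y => Φ (R y)) x ^ 2 := by
    simp only [Finset.mul_sum, mul_left_comm (deriv h (R x)),
      deriv_mul_pd_sqrt hΦ (hR.differentiable x) (hpos x)]
    exact Finset.sum_congr rfl fun j _ => by ring
  rw [bohmPotential, hflux, dvg_smul (hs.const_mul _)
    ((SmoothPeriodic.comp hΦ.1 hR hpos).grad.differentiable x), hdiv]
  simp only [pd_const_mul _ _ hs, grad, mul_left_comm _ (2⁻¹ : ℝ), ← Finset.mul_sum]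
  rw [div_eq_iff hsqrt]
  linear_combination hcross / 2

lemma viscousForce_hess (hΦ : IsViscousPotential h Φ) (hh : ContDiffOn ℝ ∞ h (Set.Ioi 0))
    (hR : SmoothPeriodic R) (hpos : ∀ x, 0 < R x) (x : Fin d → ℝ) (i : Fin d) :
    viscousForce (fun y => h (R y)) (fun y => legendreDual h (R y))
      (hess fun y => Φ (R y)) x i = 2 * R x * grad (bohmPotential h R) x i := by
  have hφ : SmoothPeriodic fun y => Φ (R y) := SmoothPeriodic.comp hΦ.1 hR hpos
  have hlap : DifferentiableAt ℝ (fun y => deriv h (R y) * lap (fun z => Φ (R z)) y) x :=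
    ((SmoothPeriodic.comp (contDiffOn_deriv_Ioi hh) hR hpos).smul hφ.grad.dvg).differentiable x
  have hsq : DifferentiableAt ℝ (fun y => ∑ j, grad (fun z => Φ (R z)) y j ^ 2) x := by
    have := hφ.grad.differentiable x
    fun_prop
  have hbohm : bohmPotential h R = fun y => 2⁻¹ * (deriv h (R y) * lap (fun z => Φ (R z)) y)
      + 4⁻¹ * ∑ j, grad (fun z => Φ (R z)) y j ^ 2 := by
    ext y
    rw [bohmPotential_eq hΦ hR hpos, div_eq_inv_mul, div_eq_inv_mul]
    rfl
  have htranspose : (hess fun y => Φ (R y)) = fun y i j => jac (grad fun z => Φ (R z)) y j i := rfl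
  rw [htranspose, viscousForce_jac_transpose hh hR hpos hφ.grad, hbohm, grad,
    pd_add i (hlap.const_mul _) (hsq.const_mul _), pd_const_mul i _ hlap, pd_const_mul i _ hsq,
    pd_sum_sq i (hφ.grad.differentiable x)]
  simp only [← mul_pd_viscousPotential hΦ hh (hR.differentiable x) (hpos x), mul_assoc,
    ← Finset.mul_sum]
  simp only [grad, lap, dvg]
  ring

end DensityDependentViscosity

section SpaceTime

variable {d : ℕ} {E : Type*} [NormedAddCommGroup E] [NormedSpace ℝ E] {I : Set ℝ} {t : ℝ}

/-- Time-dependent fields on the torus, smooth in space-time for times in `I`. -/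
structure SmoothPeriodicOn (I : Set ℝ) (f : ℝ → (Fin d → ℝ) → E) : Prop where
  contDiffOn : ContDiffOn ℝ ∞ (fun p : ℝ × (Fin d → ℝ) => f p.1 p.2) (I ×ˢ Set.univ)
  periodic : ∀ t ∈ I, SpacePeriodic (f t)

variable {f : ℝ → (Fin d → ℝ) → ℝ}

lemma SmoothPeriodicOn.contDiffAt {f : ℝ → (Fin d → ℝ) → E} (hf : SmoothPeriodicOn I f)
    (hI : IsOpen I) (ht : t ∈ I) (x : Fin d → ℝ) :
    ContDiffAt ℝ ∞ (fun p : ℝ × (Fin d → ℝ) => f p.1 p.2) (t, x) :=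
  hf.contDiffOn.contDiffAt ((hI.prod isOpen_univ).mem_nhds ⟨ht, Set.mem_univ x⟩)

lemma SmoothPeriodicOn.slice {f : ℝ → (Fin d → ℝ) → E} (hf : SmoothPeriodicOn I f) (ht : t ∈ I) :
    SmoothPeriodic (f t) where
  contDiff := hf.contDiffOn.comp_contDiff (contDiff_prodMk_right t) fun x => ⟨ht, Set.mem_univ x⟩
  periodic := hf.periodic t ht

lemma SmoothPeriodicOn.const (a : E) : SmoothPeriodicOn I fun _ (_ : Fin d → ℝ) => a :=
  ⟨contDiffOn_const, fun _ _ _ _ => rfl⟩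

lemma SmoothPeriodicOn.add {f g : ℝ → (Fin d → ℝ) → E} (hf : SmoothPeriodicOn I f)
    (hg : SmoothPeriodicOn I g) : SmoothPeriodicOn I fun s x => f s x + g s x :=
  ⟨hf.contDiffOn.add hg.contDiffOn, fun _ hs => ((hf.slice hs).add (hg.slice hs)).periodic⟩

lemma SmoothPeriodicOn.smul {g : ℝ → (Fin d → ℝ) → E} (hf : SmoothPeriodicOn I f)
    (hg : SmoothPeriodicOn I g) : SmoothPeriodicOn I fun s x => f s x • g s x :=
  ⟨hf.contDiffOn.smul hg.contDiffOn, fun _ hs => ((hf.slice hs).smul (hg.slice hs)).periodic⟩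

lemma SmoothPeriodicOn.sum {ι : Type*} {s : Finset ι} {F : ι → ℝ → (Fin d → ℝ) → E}
    (hF : ∀ k ∈ s, SmoothPeriodicOn I (F k)) : SmoothPeriodicOn I fun t x => ∑ k ∈ s, F k t x :=
  ⟨ContDiffOn.sum fun k hk => (hF k hk).contDiffOn,
    fun _ ht => (SmoothPeriodic.sum fun k hk => (hF k hk).slice ht).periodic⟩

lemma SmoothPeriodicOn.comp {G : ℝ → ℝ} {s : Set ℝ} (hG : ContDiffOn ℝ ∞ G s)
    (hf : SmoothPeriodicOn I f) (hs : ∀ t ∈ I, ∀ x, f t x ∈ s) :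
    SmoothPeriodicOn I fun t x => G (f t x) :=
  ⟨hG.comp hf.contDiffOn fun p hp => hs p.1 hp.1 p.2,
    fun t ht => (SmoothPeriodic.comp hG (hf.slice ht) (hs t ht)).periodic⟩

lemma smoothPeriodicOn_pi {ι : Type*} [Fintype ι] {U : ℝ → (Fin d → ℝ) → ι → E} :
    SmoothPeriodicOn I U ↔ ∀ i, SmoothPeriodicOn I fun s x => U s x i :=
  ⟨fun hU i => ⟨contDiffOn_pi.1 hU.contDiffOn i, fun _ hs => ((hU.slice hs).apply i).periodic⟩,
    fun hU => ⟨contDiffOn_pi.2 fun i => (hU i).contDiffOn,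
      fun s hs x n => funext fun i => (hU i).periodic s hs x n⟩⟩

lemma SmoothPeriodicOn.apply {ι : Type*} [Fintype ι] {U : ℝ → (Fin d → ℝ) → ι → E}
    (hU : SmoothPeriodicOn I U) (i : ι) : SmoothPeriodicOn I fun s x => U s x i :=
  smoothPeriodicOn_pi.1 hU i

lemma SmoothPeriodicOn.pd_eq_fderiv (hf : SmoothPeriodicOn I f) (hI : IsOpen I) (ht : t ∈ I)
    (i : Fin d) (x : Fin d → ℝ) :
    pd i (f t) x = fderiv ℝ (fun p : ℝ × (Fin d → ℝ) => f p.1 p.2) (t, x) (0, Pi.single i 1) := by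
  have hdiff := ((hf.contDiffAt hI ht x).differentiableAt (by simp)).hasFDerivAt
  have hslice := (hdiff.comp x (hasFDerivAt_prodMk_right t x)).fderiv
  simp only [Function.comp_def] at hslice
  simp [pd, hslice]

lemma SmoothPeriodicOn.hasDerivAt_fderiv (hf : SmoothPeriodicOn I f) (hI : IsOpen I) (ht : t ∈ I)
    (x : Fin d → ℝ) :
    HasDerivAt (fun s => f s x)
      (fderiv ℝ (fun p : ℝ × (Fin d → ℝ) => f p.1 p.2) (t, x) (1, 0)) t := by
  have hdiff := ((hf.contDiffAt hI ht x).differentiableAt (by simp)).hasFDerivAt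
  have hpath : HasDerivAt (fun s : ℝ => (s, x)) ((1 : ℝ), (0 : Fin d → ℝ)) t :=
    (hasDerivAt_id t).prodMk (hasDerivAt_const t x)
  exact hdiff.comp_hasDerivAt t hpath

lemma SmoothPeriodicOn.differentiableAt_time (hf : SmoothPeriodicOn I f) (hI : IsOpen I)
    (ht : t ∈ I) (x : Fin d → ℝ) : DifferentiableAt ℝ (fun s => f s x) t :=
  (hf.hasDerivAt_fderiv hI ht x).differentiableAt

lemma SmoothPeriodicOn.contDiffOn_fderiv (hf : SmoothPeriodicOn I f) (hI : IsOpen I) :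
    ContDiffOn ℝ ∞ (fderiv ℝ fun p : ℝ × (Fin d → ℝ) => f p.1 p.2) (I ×ˢ Set.univ) :=
  hf.contDiffOn.fderiv_of_isOpen (hI.prod isOpen_univ) (by simp)

lemma SmoothPeriodicOn.pd (hf : SmoothPeriodicOn I f) (hI : IsOpen I) (i : Fin d) :
    SmoothPeriodicOn I fun s x => _root_.pd i (f s) x where
  contDiffOn := ((hf.contDiffOn_fderiv hI).clm_apply contDiffOn_const).congr
    fun p hp => hf.pd_eq_fderiv hI hp.1 i p.2
  periodic _ hs := ((hf.slice hs).pd i).periodic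

lemma SmoothPeriodicOn.grad (hf : SmoothPeriodicOn I f) (hI : IsOpen I) :
    SmoothPeriodicOn I fun s => _root_.grad (f s) :=
  smoothPeriodicOn_pi.2 fun i => hf.pd hI i

lemma SmoothPeriodicOn.timeDeriv (hf : SmoothPeriodicOn I f) (hI : IsOpen I) :
    SmoothPeriodicOn I fun s x => deriv (fun r => f r x) s where
  contDiffOn := ((hf.contDiffOn_fderiv hI).clm_apply contDiffOn_const).congr
    fun p hp => (hf.hasDerivAt_fderiv hI hp.1 p.2).deriv
  periodic s hs x n := Filter.EventuallyEq.deriv_eq <| by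
    filter_upwards [hI.mem_nhds hs] with r hr using hf.periodic r hr x n

lemma SmoothPeriodicOn.deriv_pd_comm (hf : SmoothPeriodicOn I f) (hI : IsOpen I) (ht : t ∈ I)
    (i : Fin d) (x : Fin d → ℝ) :
    deriv (fun s => _root_.pd i (f s) x) t
      = _root_.pd i (fun y => deriv (fun s => f s y) t) x := by
  rw [((hf.pd hI i).hasDerivAt_fderiv hI ht x).deriv, (hf.timeDeriv hI).pd_eq_fderiv hI ht i x]
  have hdom : I ×ˢ Set.univ ∈ nhds (t, x) := (hI.prod isOpen_univ).mem_nhds ⟨ht, Set.mem_univ x⟩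
  have hdiff := ((hf.contDiffOn_fderiv hI).contDiffAt hdom).differentiableAt (by simp)
  have hsymm : IsSymmSndFDerivAt ℝ (fun p : ℝ × (Fin d → ℝ) => f p.1 p.2) (t, x) :=
    ContDiffAt.isSymmSndFDerivAt (n := 2)
      ((hf.contDiffAt hI ht x).of_le ENat.LEInfty.out) (by simp)
  have hspace : (fun p : ℝ × (Fin d → ℝ) => _root_.pd i (f p.1) p.2) =ᶠ[nhds (t, x)]
      fun p => fderiv ℝ (fun p : ℝ × (Fin d → ℝ) => f p.1 p.2) p (0, Pi.single i 1) := by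
    filter_upwards [hdom] with p hp using hf.pd_eq_fderiv hI hp.1 i p.2
  have htime : (fun p : ℝ × (Fin d → ℝ) => deriv (fun s => f s p.2) p.1) =ᶠ[nhds (t, x)]
      fun p => fderiv ℝ (fun p : ℝ × (Fin d → ℝ) => f p.1 p.2) p (1, 0) := by
    filter_upwards [hdom] with p hp using (hf.hasDerivAt_fderiv hI hp.1 p.2).deriv
  rw [hspace.fderiv_eq, htime.fderiv_eq, fderiv_clm_apply hdiff (differentiableAt_const _),
    fderiv_clm_apply hdiff (differentiableAt_const _)]
  simpa using hsymm _ _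

lemma SmoothPeriodicOn.hasDerivAt_integral (hf : SmoothPeriodicOn I f) (hI : IsOpen I)
    (ht : t ∈ I) :
    HasDerivAt (fun s => ∫ x in unitBox d, f s x)
      (∫ x in unitBox d, deriv (fun s => f s x) t) t := by
  obtain ⟨J, hJt, hJI, hJ⟩ := local_compact_nhds (hI.mem_nhds ht)
  obtain ⟨C, hC⟩ := (hJ.prod (isCompact_Icc : IsCompact (unitBox d))).exists_bound_of_continuousOn
    ((hf.timeDeriv hI).contDiffOn.continuousOn.mono (Set.prod_mono hJI (Set.subset_univ _)))
  refine (hasDerivAt_integral_of_dominated_loc_of_deriv_le (F := f)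
    (F' := fun s x => deriv (fun r => f r x) s) (bound := fun _ => C) hJt ?_
    (integrableOn_unitBox (hf.slice ht).continuous)
    ((hf.timeDeriv hI).slice ht).continuous.aestronglyMeasurable ?_
    (integrableOn_unitBox continuous_const) ?_).2
  · filter_upwards [hJt] with s hs
    exact (hf.slice (hJI hs)).continuous.aestronglyMeasurable
  · filter_upwards [ae_restrict_mem measurableSet_Icc] with x hx s hs using hC (s, x) ⟨hs, hx⟩
  · exact .of_forall fun x s hs => (hf.differentiableAt_time hI (hJI hs) x).hasDerivAt

end SpaceTime

section MaterialDerivative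

variable {d : ℕ} {I : Set ℝ} {t : ℝ} {ρ f g : ℝ → (Fin d → ℝ) → ℝ}
  {u V : ℝ → (Fin d → ℝ) → Fin d → ℝ}

/-- The material derivative `∂_t f + u · ∇f` along the flow of `u`. -/
def materialDeriv (u : ℝ → (Fin d → ℝ) → Fin d → ℝ) (f : ℝ → (Fin d → ℝ) → ℝ) (t : ℝ)
    (x : Fin d → ℝ) : ℝ :=
  deriv (fun s => f s x) t + ∑ j, u t x j * pd j (f t) x

/-- The continuity equation `∂_t ρ + div (ρ u) = 0` for times in `I`. -/
def ConservesMass (I : Set ℝ) (ρ : ℝ → (Fin d → ℝ) → ℝ)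
    (u : ℝ → (Fin d → ℝ) → Fin d → ℝ) : Prop :=
  ∀ t ∈ I, ∀ x, deriv (fun s => ρ s x) t + dvg (fun y => ρ t y • u t y) x = 0

lemma materialDeriv_add_const_mul (hI : IsOpen I) (ht : t ∈ I) (hf : SmoothPeriodicOn I f)
    (hg : SmoothPeriodicOn I g) (a : ℝ) (x : Fin d → ℝ) :
    materialDeriv u (fun s y => f s y + a * g s y) t x
      = materialDeriv u f t x + a * materialDeriv u g t x := by
  have hfx := (hf.slice ht).differentiable x
  have hgx := (hg.slice ht).differentiable x
  have hgt := hg.differentiableAt_time hI ht x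
  simp only [materialDeriv, deriv_fun_add (hf.differentiableAt_time hI ht x) (hgt.const_mul a),
    deriv_const_mul a hgt, pd_add _ hfx (hgx.const_mul a), pd_const_mul _ a hgx, mul_add,
    Finset.sum_add_distrib, Finset.mul_sum, mul_left_comm a]
  ring

lemma materialDeriv_comp {G : ℝ → ℝ} (hI : IsOpen I) (ht : t ∈ I) (hf : SmoothPeriodicOn I f)
    {x : Fin d → ℝ} (hG : DifferentiableAt ℝ G (f t x)) :
    materialDeriv u (fun s y => G (f s y)) t x = deriv G (f t x) * materialDeriv u f t x := by
  have htime := (hG.hasDerivAt.comp t (hf.differentiableAt_time hI ht x).hasDerivAt).deriv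
  simp only [Function.comp_def] at htime
  simp only [materialDeriv, htime, pd_comp _ hG ((hf.slice ht).differentiable x),
    mul_add, Finset.mul_sum, mul_left_comm (deriv G _)]

lemma materialDeriv_sum_sq_div_two (hI : IsOpen I) (ht : t ∈ I) (hV : SmoothPeriodicOn I V)
    (x : Fin d → ℝ) :
    materialDeriv u (fun s y => (∑ i, V s y i ^ 2) / 2) t x
      = ∑ i, V t x i * materialDeriv u (fun s y => V s y i) t x := by
  have htime : deriv (fun s => (∑ i, V s x i ^ 2) / 2) t
      = ∑ i, V t x i * deriv (fun s => V s x i) t := by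
    have hsq (i : Fin d) := ((hV.apply i).differentiableAt_time hI ht x).hasDerivAt.fun_pow 2
    rw [((HasDerivAt.fun_sum fun i _ => hsq i).div_const 2).deriv, Finset.sum_div]
    exact Finset.sum_congr rfl fun i _ => by push_cast; ring
  have hspace (j : Fin d) : pd j (fun y => (∑ i, V t y i ^ 2) / 2) x
      = ∑ i, V t x i * pd j (fun y => V t y i) x := by
    have hVx := (hV.slice ht).differentiable x
    have hsq : DifferentiableAt ℝ (fun y => ∑ i, V t y i ^ 2) x := by fun_prop
    simp only [div_eq_inv_mul, pd_const_mul j _ hsq, pd_sum_sq j hVx]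
    ring
  simp only [materialDeriv, htime, hspace, mul_add, Finset.sum_add_distrib, Finset.mul_sum]
  rw [Finset.sum_comm]
  simp only [mul_left_comm]

lemma materialDeriv_pd (hI : IsOpen I) (ht : t ∈ I) (hu : SmoothPeriodicOn I u)
    (hf : SmoothPeriodicOn I f) (i : Fin d) (x : Fin d → ℝ) :
    materialDeriv u (fun s => pd i (f s)) t x
      = pd i (materialDeriv u f t) x - ∑ j, pd i (fun y => u t y j) x * pd j (f t) x := by
  have hux (j : Fin d) := ((hu.slice ht).apply j).differentiable x
  have hfx (j : Fin d) := ((hf.slice ht).pd j).differentiable x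
  have hswap (j : Fin d) : pd i (pd j (f t)) x = pd j (pd i (f t)) x :=
    pd_comm i j ((hf.slice ht).contDiff.contDiffAt.of_le ENat.LEInfty.out)
  have hrhs : pd i (materialDeriv u f t) x = pd i (fun y => deriv (fun s => f s y) t) x
      + ∑ j, (u t x j * pd i (pd j (f t)) x + pd i (fun y => u t y j) x * pd j (f t) x) := by
    unfold materialDeriv
    rw [pd_add i (((hf.timeDeriv hI).slice ht).differentiable x)
      (.fun_sum fun j _ => (hux j).fun_mul (hfx j)),
      pd_sum i fun j _ => (hux j).fun_mul (hfx j)]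
    simp only [pd_mul i (hux _) (hfx _)]
  rw [hrhs, materialDeriv, hf.deriv_pd_comm hI ht i x]
  simp only [hswap, Finset.sum_add_distrib]
  ring

lemma ConservesMass.materialDeriv_eq (hmass : ConservesMass I ρ u) (ht : t ∈ I)
    (hρ : SmoothPeriodicOn I ρ) (hu : SmoothPeriodicOn I u) (x : Fin d → ℝ) :
    materialDeriv u ρ t x = -(ρ t x * dvg (u t) x) := by
  have hcont := hmass t ht x
  rw [dvg_smul ((hρ.slice ht).differentiable x) ((hu.slice ht).differentiable x)] at hcont
  unfold materialDeriv
  linear_combination hcont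

lemma ConservesMass.deriv_mul_add_dvg (hmass : ConservesMass I ρ u) (hI : IsOpen I) (ht : t ∈ I)
    (hρ : SmoothPeriodicOn I ρ) (hu : SmoothPeriodicOn I u) (hf : SmoothPeriodicOn I f)
    (x : Fin d → ℝ) :
    deriv (fun s => ρ s x * f s x) t + dvg (fun y => (ρ t y * f t y) • u t y) x
      = ρ t x * materialDeriv u f t x := by
  have hρx := (hρ.slice ht).differentiable x
  have hux := (hu.slice ht).differentiable x
  have hfx := (hf.slice ht).differentiable x
  have hcont := hmass t ht x
  rw [dvg_smul hρx hux] at hcont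
  rw [deriv_fun_mul (hρ.differentiableAt_time hI ht x) (hf.differentiableAt_time hI ht x),
    dvg_smul (hρx.fun_mul hfx) hux]
  have hflux : ∑ j, u t x j * pd j (fun y => ρ t y * f t y) x
      = ρ t x * ∑ j, u t x j * pd j (f t) x + f t x * ∑ j, u t x j * pd j (ρ t) x := by
    simp only [pd_mul _ hρx hfx, mul_add, Finset.sum_add_distrib, Finset.mul_sum]
    congr 1 <;> exact Finset.sum_congr rfl fun j _ => by ring
  rw [hflux, materialDeriv]
  linear_combination f t x * hcont

lemma ConservesMass.hasDerivAt_integral_mul (hmass : ConservesMass I ρ u) (hI : IsOpen I)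
    (ht : t ∈ I) (hρ : SmoothPeriodicOn I ρ) (hu : SmoothPeriodicOn I u)
    (hf : SmoothPeriodicOn I f) :
    HasDerivAt (fun s => ∫ x in unitBox d, ρ s x * f s x)
      (∫ x in unitBox d, ρ t x * materialDeriv u f t x) t := by
  have hflux : SmoothPeriodic fun y => (ρ t y * f t y) • u t y :=
    ((hρ.slice ht).smul (hf.slice ht)).smul (hu.slice ht)
  have hρf : SmoothPeriodicOn I fun s x => ρ s x * f s x := hρ.smul hf
  convert hρf.hasDerivAt_integral hI ht using 1
  simp only [← hmass.deriv_mul_add_dvg hI ht hρ hu hf]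
  rw [integral_add (integrableOn_unitBox ((hρf.timeDeriv hI).slice ht).continuous)
    (integrableOn_unitBox hflux.dvg.continuous), integral_dvg_eq_zero hflux, add_zero]

lemma ConservesMass.hasDerivAt_kineticEnergy (hmass : ConservesMass I ρ u) (hI : IsOpen I)
    (ht : t ∈ I) (hρ : SmoothPeriodicOn I ρ) (hu : SmoothPeriodicOn I u)
    (hV : SmoothPeriodicOn I V) :
    HasDerivAt (fun s => ∫ x in unitBox d, ρ s x * ((∑ i, V s x i ^ 2) / 2))
      (∫ x in unitBox d, ∑ i, V t x i * (ρ t x * materialDeriv u (fun s y => V s y i) t x)) t := by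
  have hsq : SmoothPeriodicOn I fun s x => (∑ i, V s x i ^ 2) / 2 := by
    simp only [div_eq_inv_mul, pow_two]
    exact (SmoothPeriodicOn.const _).smul (.sum fun i _ => (hV.apply i).smul (hV.apply i))
  convert hmass.hasDerivAt_integral_mul hI ht hρ hu hsq using 4 with x
  rw [materialDeriv_sum_sq_div_two hI ht hV, Finset.mul_sum]
  simp only [mul_left_comm]

lemma ConservesMass.hasDerivAt_internalEnergy (hmass : ConservesMass I ρ u) (hI : IsOpen I)
    (ht : t ∈ I) (hρ : SmoothPeriodicOn I ρ) (hu : SmoothPeriodicOn I u)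
    (hpos : ∀ s ∈ I, ∀ x, 0 < ρ s x) {e : ℝ → ℝ} (he : ContDiffOn ℝ ∞ e (Set.Ioi 0)) :
    HasDerivAt (fun s => ∫ x in unitBox d, e (ρ s x))
      (∫ x in unitBox d, ∑ i, u t x i * (ρ t x * deriv (deriv e) (ρ t x) * grad (ρ t) x i)) t := by
  have hρt := hρ.slice ht
  have he' := contDiffOn_deriv_Ioi he
  have henthalpy : SmoothPeriodic fun x => deriv e (ρ t x) := .comp he' hρt (hpos t ht)
  have htime (x : Fin d → ℝ) : deriv (fun s => e (ρ s x)) t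
      = -(deriv e (ρ t x) * dvg (fun y => ρ t y • u t y) x) := by
    have hchain := ((differentiableAt_of_contDiffOn_Ioi he (hpos t ht x)).hasDerivAt.comp t
      (hρ.differentiableAt_time hI ht x).hasDerivAt).deriv
    simp only [Function.comp_def] at hchain
    rw [hchain, eq_neg_of_add_eq_zero_left (hmass t ht x), mul_neg]
  convert (SmoothPeriodicOn.comp he hρ hpos).hasDerivAt_integral hI ht using 1
  simp only [htime, integral_neg]
  rw [← integral_dot_grad (hρt.smul (hu.slice ht)) henthalpy]
  congr! 3 with x i
  rw [grad, grad, pd_comp i (differentiableAt_of_contDiffOn_Ioi he' (hpos t ht x))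
    (hρt.differentiable x), Pi.smul_apply, smul_eq_mul]
  ring

end MaterialDerivative

section PotentialTransport

variable {d : ℕ} {I : Set ℝ} {t : ℝ} {h Φ : ℝ → ℝ} {ρ : ℝ → (Fin d → ℝ) → ℝ}
  {u : ℝ → (Fin d → ℝ) → Fin d → ℝ}

lemma ConservesMass.mul_materialDeriv_grad_viscousPotential (hmass : ConservesMass I ρ u)
    (hI : IsOpen I) (ht : t ∈ I) (hρ : SmoothPeriodicOn I ρ) (hu : SmoothPeriodicOn I u)
    (hpos : ∀ s ∈ I, ∀ x, 0 < ρ s x) (hΦ : IsViscousPotential h Φ)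
    (hh : ContDiffOn ℝ ∞ h (Set.Ioi 0)) (x : Fin d → ℝ) (i : Fin d) :
    ρ t x * materialDeriv u (fun s y => grad (fun z => Φ (ρ s z)) y i) t x
      = -viscousForce (fun y => h (ρ t y)) (fun y => legendreDual h (ρ t y))
          (fun y i j => jac (u t) y j i) x i := by
  have hφ : SmoothPeriodicOn I fun s y => Φ (ρ s y) := .comp hΦ.1 hρ hpos
  have hDφ : materialDeriv u (fun s y => Φ (ρ s y)) t
      = fun y => -1 * (deriv h (ρ t y) * dvg (u t) y) := by
    ext y
    rw [materialDeriv_comp hI ht hρ (differentiableAt_of_contDiffOn_Ioi hΦ.1 (hpos t ht y)),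
      hmass.materialDeriv_eq ht hρ hu, ← hΦ.2 _ (hpos t ht y)]
    ring
  have hdiss : DifferentiableAt ℝ (fun y => deriv h (ρ t y) * dvg (u t) y) x :=
    ((SmoothPeriodic.comp (contDiffOn_deriv_Ioi hh) (hρ.slice ht) (hpos t ht)).smul
      (hu.slice ht).dvg).differentiable x
  simp only [grad]
  rw [viscousForce_jac_transpose hh (hρ.slice ht) (hpos t ht) (hu.slice ht),
    materialDeriv_pd hI ht hu hφ, hDφ, pd_const_mul i _ hdiss]
  simp only [← mul_pd_viscousPotential hΦ hh ((hρ.slice ht).differentiable x) (hpos t ht x),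
    mul_assoc, ← Finset.mul_sum, mul_comm (pd _ (fun y => Φ (ρ t y)) x)]
  ring

end PotentialTransport

section EffectiveStrain

variable {d : ℕ} {ν κ c : ℝ} {φ : (Fin d → ℝ) → ℝ} {U : (Fin d → ℝ) → Fin d → ℝ}

/-- The matrix field `2ν DU + κ² ∇²φ − c (∇U)ᵀ` whose viscous force drives the effective velocity
`U + c ∇φ`. -/
def effectiveStrain (ν κ c : ℝ) (U : (Fin d → ℝ) → Fin d → ℝ) (φ : (Fin d → ℝ) → ℝ)
    (x : Fin d → ℝ) : Fin d → Fin d → ℝ :=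
  (2 * ν) • symD U x + κ ^ 2 • hess φ x + (-c) • fun i j => jac U x j i

lemma SmoothPeriodic.jac_transpose (hU : SmoothPeriodic U) :
    SmoothPeriodic fun x i j => _root_.jac U x j i :=
  smoothPeriodic_pi.2 fun i => smoothPeriodic_pi.2 fun j => (hU.jac.apply j).apply i

lemma SmoothPeriodic.symD (hU : SmoothPeriodic U) : SmoothPeriodic (symD U) :=
  smoothPeriodic_pi.2 fun i => smoothPeriodic_pi.2 fun j => by
    simp only [_root_.symD, div_eq_inv_mul]
    exact (SmoothPeriodic.const _).smul
      (((hU.jac.apply i).apply j).add ((hU.jac.apply j).apply i))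

lemma SmoothPeriodic.hess (hφ : SmoothPeriodic φ) : SmoothPeriodic (hess φ) :=
  hφ.grad.jac_transpose

lemma SmoothPeriodic.effectiveStrain (hU : SmoothPeriodic U) (hφ : SmoothPeriodic φ) :
    SmoothPeriodic (effectiveStrain ν κ c U φ) :=
  (((SmoothPeriodic.const _).smul hU.symD).add ((SmoothPeriodic.const _).smul hφ.hess)).add
    ((SmoothPeriodic.const _).smul hU.jac_transpose)

lemma sum_effectiveStrain_diag (x : Fin d → ℝ) :
    ∑ k, effectiveStrain ν κ c U φ x k k = (2 * ν - c) * dvg U x + κ ^ 2 * lap φ x := by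
  calc ∑ k, effectiveStrain ν κ c U φ x k k
      = ∑ k, ((2 * ν - c) * jac U x k k + κ ^ 2 * hess φ x k k) :=
        Finset.sum_congr rfl fun k _ => by
          simp only [effectiveStrain, symD, Pi.add_apply, Pi.smul_apply, smul_eq_mul]; ring
    _ = (2 * ν - c) * dvg U x + κ ^ 2 * lap φ x := by
        rw [Finset.sum_add_distrib, ← Finset.mul_sum, ← Finset.mul_sum]; rfl

lemma viscousForce_effectiveStrain {η ζ : (Fin d → ℝ) → ℝ} {x : Fin d → ℝ}
    (hη : DifferentiableAt ℝ η x) (hζ : DifferentiableAt ℝ ζ x) (hφ : SmoothPeriodic φ)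
    (hU : SmoothPeriodic U) (i : Fin d) :
    viscousForce η ζ (effectiveStrain ν κ c U φ) x i
      = 2 * ν * viscousForce η ζ (symD U) x i + κ ^ 2 * viscousForce η ζ (hess φ) x i
        - c * viscousForce η ζ (fun y i j => jac U y j i) x i := by
  have hsym := hU.symD.differentiable x
  have hhess := hφ.hess.differentiable x
  have htranspose := hU.jac_transpose.differentiable x
  unfold effectiveStrain
  rw [viscousForce_add hη hζ ((hsym.fun_const_smul _).fun_add (hhess.fun_const_smul _))
      (htranspose.fun_const_smul _),
    viscousForce_add hη hζ (hsym.fun_const_smul _) (hhess.fun_const_smul _),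
    viscousForce_const_smul _ hη hζ hsym, viscousForce_const_smul _ hη hζ hhess,
    viscousForce_const_smul _ hη hζ htranspose]
  simp only [Pi.add_apply, Pi.smul_apply, smul_eq_mul, neg_mul, sub_eq_add_neg]

lemma hess_comm (hφ : SmoothPeriodic φ) (x : Fin d → ℝ) (i j : Fin d) :
    hess φ x i j = hess φ x j i :=
  pd_comm i j (hφ.contDiff.contDiffAt.of_le ENat.LEInfty.out)

lemma jac_add_smul_grad (hφ : SmoothPeriodic φ) (hU : SmoothPeriodic U) (x : Fin d → ℝ)
    (i j : Fin d) :
    jac (fun y => U y + c • grad φ y) x i j = jac U x i j + c * hess φ x i j := by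
  have hwx := (hφ.pd i).differentiable x
  rw [hess_comm hφ]
  exact (pd_add j ((hU.apply i).differentiable x) (hwx.const_mul c)).trans
    (by rw [pd_const_mul j c hwx]; rfl)

lemma dvg_add_smul_grad (hφ : SmoothPeriodic φ) (hU : SmoothPeriodic U) (x : Fin d → ℝ) :
    dvg (fun y => U y + c • grad φ y) x = dvg U x + c * lap φ x := by
  calc dvg (fun y => U y + c • grad φ y) x
      = ∑ i, (jac U x i i + c * hess φ x i i) :=
        Finset.sum_congr rfl fun i _ => jac_add_smul_grad hφ hU x i i
    _ = dvg U x + c * lap φ x := by rw [Finset.sum_add_distrib, ← Finset.mul_sum]; rfl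

lemma sum_sum_eq_of_add_swap_eq {ι : Type*} [Fintype ι] {a b : ι → ι → ℝ}
    (hab : ∀ i j, a i j + a j i = b i j + b j i) : ∑ i, ∑ j, a i j = ∑ i, ∑ j, b i j := by
  have hsum : ∑ i, ∑ j, (a i j + a j i) = ∑ i, ∑ j, (b i j + b j i) := by simp only [hab]
  simp only [Finset.sum_add_distrib] at hsum
  rw [Finset.sum_comm (f := fun i j => a j i), Finset.sum_comm (f := fun i j => b j i)] at hsum
  linarith

/-- In terms of `V = U + c ∇φ` the effective strain is `2ν DV − c (∇V)ᵀ + (c² − 2νc + κ²) ∇²φ`, and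
the weight `c² − 2νc + κ²` is the one that cancels `∇²φ : ∇V`. -/
lemma viscousPower_effectiveStrain_sub (η ζ : (Fin d → ℝ) → ℝ) (hφ : SmoothPeriodic φ)
    (hU : SmoothPeriodic U) {V : (Fin d → ℝ) → Fin d → ℝ} (hV : V = fun y => U y + c • grad φ y)
    (x : Fin d → ℝ) :
    viscousPower η ζ (effectiveStrain ν κ c U φ) V x
        - (c ^ 2 - 2 * ν * c + κ ^ 2) *
          viscousPower η ζ (fun y i j => jac U y j i) (grad φ) x
      = c * (η x * ∑ i, ∑ j, antiD V x i j ^ 2)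
        + (2 * ν - c) * (η x * ∑ i, ∑ j, symD V x i j ^ 2 + ζ x * dvg V x ^ 2)
        + c * (c ^ 2 - 2 * ν * c + κ ^ 2) * (η x * ∑ i, ∑ j, hess φ x i j ^ 2)
        + c * (c ^ 2 - 2 * ν * c + κ ^ 2) * (ζ x * lap φ x ^ 2) := by
  have hjac (i j : Fin d) : jac V x i j = jac U x i j + c * hess φ x i j :=
    hV ▸ jac_add_smul_grad hφ hU x i j
  have hdiv : dvg V x = dvg U x + c * lap φ x := hV ▸ dvg_add_smul_grad hφ hU x
  have hshear : ∑ i, ∑ j, (effectiveStrain ν κ c U φ x i j * jac V x i j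
        - (c ^ 2 - 2 * ν * c + κ ^ 2) * (jac U x j i * hess φ x j i))
      = ∑ i, ∑ j, (c * antiD V x i j ^ 2 + (2 * ν - c) * symD V x i j ^ 2
        + c * (c ^ 2 - 2 * ν * c + κ ^ 2) * hess φ x i j ^ 2) :=
    sum_sum_eq_of_add_swap_eq fun i j => by
      simp only [effectiveStrain, antiD, symD, hjac, hess_comm hφ x j i, Pi.add_apply,
        Pi.smul_apply, smul_eq_mul]
      ring
  simp only [Finset.sum_add_distrib, Finset.sum_sub_distrib, ← Finset.mul_sum] at hshear
  have hbulk : ∑ k, jac U x k k = dvg U x := rfl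
  have hlap : dvg (grad φ) x = lap φ x := rfl
  have hhess (i j : Fin d) : jac (grad φ) x i j = hess φ x j i := rfl
  simp only [viscousPower, hhess, sum_effectiveStrain_diag, hbulk, hlap]
  rw [hdiv]
  linear_combination η x * hshear

lemma integral_viscousPower_effectiveStrain_sub {η ζ : (Fin d → ℝ) → ℝ} (hη : SmoothPeriodic η)
    (hζ : SmoothPeriodic ζ) (hφ : SmoothPeriodic φ) (hU : SmoothPeriodic U)
    {V : (Fin d → ℝ) → Fin d → ℝ} (hV : V = fun y => U y + c • grad φ y) :
    (∫ x in unitBox d, viscousPower η ζ (effectiveStrain ν κ c U φ) V x)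
        - (c ^ 2 - 2 * ν * c + κ ^ 2) *
          ∫ x in unitBox d, viscousPower η ζ (fun y i j => jac U y j i) (grad φ) x
      = c * (∫ x in unitBox d, η x * ∑ i, ∑ j, antiD V x i j ^ 2)
        + (2 * ν - c) *
          (∫ x in unitBox d, (η x * ∑ i, ∑ j, symD V x i j ^ 2 + ζ x * dvg V x ^ 2))
        + c * (c ^ 2 - 2 * ν * c + κ ^ 2) *
          (∫ x in unitBox d, η x * ∑ i, ∑ j, hess φ x i j ^ 2)
        + c * (c ^ 2 - 2 * ν * c + κ ^ 2) * (∫ x in unitBox d, ζ x * lap φ x ^ 2) := by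
  have hVs : SmoothPeriodic V := hV ▸ hU.add ((SmoothPeriodic.const c).smul hφ.grad)
  have hpower := (hη.viscousPower hζ (hU.effectiveStrain (ν := ν) (κ := κ) (c := c) hφ)
    hVs).continuous
  have hcross := (hη.viscousPower hζ hU.jac_transpose hφ.grad).continuous
  have hηc := hη.continuous
  have hζc := hζ.continuous
  have hsym := hVs.symD.continuous
  have hanti : Continuous (antiD V) := by
    have := hVs.jac.continuous
    unfold antiD
    fun_prop
  have hdiv := hVs.dvg.continuous
  have hhess := hφ.hess.continuous
  have hlap : Continuous (lap φ) := hφ.grad.dvg.continuous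
  simp only [← integral_const_mul]
  rw [← integral_sub, ← integral_add, ← integral_add, ← integral_add]
  · simp only [viscousPower_effectiveStrain_sub η ζ hφ hU hV]
  all_goals refine integrableOn_unitBox ?_; fun_prop

end EffectiveStrain

section QuantumNavierStokes

variable {d : ℕ} {h q p Φ : ℝ → ℝ} {ν κ c t : ℝ} {I : Set ℝ} {ρ : ℝ → (Fin d → ℝ) → ℝ}
  {u : ℝ → (Fin d → ℝ) → Fin d → ℝ}

/-- Smooth solutions, for times in `I`, of the quantum Navier–Stokes system with shear viscosity
`h`, bulk viscosity `r h'(r) − h(r)`, pressure `p` and damping coefficient `q`. -/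
structure IsQuantumNSSolution (h q p : ℝ → ℝ) (ν κ : ℝ) (I : Set ℝ)
    (ρ : ℝ → (Fin d → ℝ) → ℝ) (u : ℝ → (Fin d → ℝ) → Fin d → ℝ) : Prop where
  smooth_density : SmoothPeriodicOn I ρ
  smooth_velocity : SmoothPeriodicOn I u
  density_pos : ∀ t ∈ I, ∀ x, 0 < ρ t x
  mass : ConservesMass I ρ u
  momentum : ∀ t ∈ I, ∀ x i,
    deriv (fun s => ρ s x * u s x i) t
      + dvgM (fun y i' j => ρ t y * u t y i' * u t y j) x i
      + grad (fun y => p (ρ t y)) x i + q (ρ t x) * u t x i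
    = 2 * ν * dvgM (fun y i' j => h (ρ t y) * symD (u t) y i' j) x i
      + 2 * ν * grad (fun y => legendreDual h (ρ t y) * dvg (u t) y) x i
      + 2 * κ ^ 2 * ρ t x * grad (bohmPotential h (ρ t)) x i

/-- The effective velocity `v = u + c ∇Φ(ρ)`. -/
def effectiveVelocity (c : ℝ) (Φ : ℝ → ℝ) (ρ : ℝ → (Fin d → ℝ) → ℝ)
    (u : ℝ → (Fin d → ℝ) → Fin d → ℝ) (t : ℝ) (x : Fin d → ℝ) : Fin d → ℝ :=
  u t x + c • grad (fun y => Φ (ρ t y)) x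

lemma SmoothPeriodicOn.effectiveVelocity (hI : IsOpen I) (hρ : SmoothPeriodicOn I ρ)
    (hpos : ∀ s ∈ I, ∀ x, 0 < ρ s x) (hu : SmoothPeriodicOn I u)
    (hΦ : IsViscousPotential h Φ) : SmoothPeriodicOn I (effectiveVelocity c Φ ρ u) :=
  hu.add ((SmoothPeriodicOn.const c).smul ((SmoothPeriodicOn.comp hΦ.1 hρ hpos).grad hI))

lemma IsQuantumNSSolution.mul_materialDeriv_velocity
    (hsol : IsQuantumNSSolution h q p ν κ I ρ u) (hI : IsOpen I) (ht : t ∈ I)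
    (x : Fin d → ℝ) (i : Fin d) :
    ρ t x * materialDeriv u (fun s y => u s y i) t x
      = 2 * ν * viscousForce (fun y => h (ρ t y)) (fun y => legendreDual h (ρ t y))
            (symD (u t)) x i
        + 2 * κ ^ 2 * ρ t x * grad (bohmPotential h (ρ t)) x i
        - grad (fun y => p (ρ t y)) x i - q (ρ t x) * u t x i := by
  have htrace : (fun y => legendreDual h (ρ t y) * ∑ k, symD (u t) y k k)
      = fun y => legendreDual h (ρ t y) * dvg (u t) y := by
    simp only [symD, add_self_div_two]
    rfl
  rw [← hsol.mass.deriv_mul_add_dvg hI ht hsol.smooth_density hsol.smooth_velocity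
    (hsol.smooth_velocity.apply i), viscousForce, Pi.add_apply, htrace]
  have hmom := hsol.momentum t ht x i
  change deriv (fun s => ρ s x * u s x i) t + dvg (fun y => (ρ t y * u t y i) • u t y) x
    + _ + _ = _ at hmom
  linear_combination hmom

lemma IsQuantumNSSolution.mul_materialDeriv_effectiveVelocity
    (hsol : IsQuantumNSSolution h q p ν κ I ρ u) (hI : IsOpen I) (ht : t ∈ I)
    (hh : ContDiffOn ℝ ∞ h (Set.Ioi 0)) (hΦ : IsViscousPotential h Φ) (x : Fin d → ℝ)
    (i : Fin d) :
    ρ t x * materialDeriv u (fun s y => effectiveVelocity c Φ ρ u s y i) t x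
      = viscousForce (fun y => h (ρ t y)) (fun y => legendreDual h (ρ t y))
            (effectiveStrain ν κ c (u t) fun y => Φ (ρ t y)) x i
        - grad (fun y => p (ρ t y)) x i - q (ρ t x) * u t x i := by
  have hρ := hsol.smooth_density
  have hu := hsol.smooth_velocity
  have hφ : SmoothPeriodicOn I fun s y => Φ (ρ s y) := .comp hΦ.1 hρ hsol.density_pos
  have hη := (SmoothPeriodic.comp hh (hρ.slice ht) (hsol.density_pos t ht)).differentiable x
  have hζ := (SmoothPeriodic.comp (contDiffOn_legendreDual hh) (hρ.slice ht)
    (hsol.density_pos t ht)).differentiable x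
  rw [viscousForce_effectiveStrain hη hζ (hφ.slice ht) (hu.slice ht),
    viscousForce_hess hΦ hh (hρ.slice ht) (hsol.density_pos t ht)]
  have hDv := materialDeriv_add_const_mul (u := u) hI ht (hu.apply i) ((hφ.grad hI).apply i) c x
  have hDu := hsol.mul_materialDeriv_velocity hI ht x i
  have hDw := hsol.mass.mul_materialDeriv_grad_viscousPotential hI ht hρ hu hsol.density_pos
    hΦ hh x i
  change ρ t x * materialDeriv u (fun s y => u s y i + c * grad (fun z => Φ (ρ s z)) y i) t x = _
  rw [hDv]
  linear_combination hDu + c * hDw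

end QuantumNavierStokes

section Pressure

variable {d : ℕ} {h q Φ P F : ℝ → ℝ} {c m γ : ℝ} {R : (Fin d → ℝ) → ℝ}
  {U V : (Fin d → ℝ) → Fin d → ℝ}

lemma mul_deriv_deriv_of_legendreDual_eq {e p : ℝ → ℝ} (he : ContDiffOn ℝ ∞ e (Set.Ioi 0))
    (hp : ∀ r, 0 < r → legendreDual e r = p r) {r : ℝ} (hr : 0 < r) :
    r * deriv (deriv e) r = deriv p r := by
  rw [← deriv_legendreDual he hr]
  exact Filter.EventuallyEq.deriv_eq <| by filter_upwards [Ioi_mem_nhds hr] with s hs using hp s hs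

lemma contDiffOn_rpow_const_Ioi (a : ℝ) : ContDiffOn ℝ ∞ (fun r : ℝ => r ^ a) (Set.Ioi 0) :=
  contDiffOn_id.rpow_const_of_ne fun _ hr => (Set.mem_Ioi.1 hr).ne'

lemma contDiffOn_rpow_div_sub_one_add (hF : ContDiffOn ℝ ∞ F (Set.Ioi 0)) (γ a : ℝ) :
    ContDiffOn ℝ ∞ (fun r => r ^ γ / (γ - 1) + a * F r) (Set.Ioi 0) :=
  ((contDiffOn_rpow_const_Ioi γ).div_const _).add (contDiffOn_const.mul hF)

lemma contDiffOn_rpow_add_legendreDual (hF : IsFeps P F)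
    (hFs : ContDiffOn ℝ ∞ F (Set.Ioi 0)) (γ : ℝ) :
    ContDiffOn ℝ ∞ (fun r => r ^ γ + P r) (Set.Ioi 0) :=
  (contDiffOn_rpow_const_Ioi γ).add
    ((contDiffOn_legendreDual hFs).congr fun r hr => (hF.2 r hr).symm)

lemma legendreDual_rpow_div_sub_one_add (hγ : γ ≠ 1) (hF : IsFeps P F) (a : ℝ) {r : ℝ}
    (hr : 0 < r) : legendreDual (fun r => r ^ γ / (γ - 1) + a * F r) r = r ^ γ + a * P r := by
  have hrpow := (hasDerivAt_rpow_const (x := r) (p := γ) (.inl hr.ne')).div_const (γ - 1)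
  have hderiv := (hrpow.add ((hF.1 r hr).hasDerivAt.const_mul a)).deriv
  rw [legendreDual, ← hF.2 r hr]
  have hγ' : γ - 1 ≠ 0 := sub_ne_zero.2 hγ
  have hmul : r ^ γ = r * r ^ (γ - 1) := by rw [rpow_sub_one hr.ne']; field_simp
  simp only [Pi.add_def] at hderiv
  rw [hderiv, hmul]
  field_simp
  ring

/-- Since `∇P(R) = m q ∇Φ(R)`, the damping contributes `q U · V = q |V|² − (c/m) V · ∇P(R)`, which
turns the weight `1` of `P` into `(m − c)/m`. -/
lemma pressure_damping_work_eq (hγ : γ ≠ 1) (hm : m ≠ 0)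
    (hP : ∀ r, 0 < r → HasDerivAt P (m * q r * deriv h r / r) r) (hΦ : IsViscousPotential h Φ)
    (hF : IsFeps P F) (hFs : ContDiffOn ℝ ∞ F (Set.Ioi 0)) {x : Fin d → ℝ}
    (hR : DifferentiableAt ℝ R x) (hpos : 0 < R x)
    (hV : V x = U x + c • grad (fun y => Φ (R y)) x) (i : Fin d) :
    V x i * (grad (fun y => R y ^ γ + P (R y)) x i + q (R x) * U x i)
        - U x i * (R x * deriv (deriv fun r => r ^ γ / (γ - 1) + (m - c) / m * F r) (R x) *
            grad R x i)
      = q (R x) * V x i ^ 2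
        + c * γ * (deriv h (R x) * grad R x i ^ 2 * R x ^ (γ - 2))
        + c * ((m - c) / m) * (deriv h (R x) * grad R x i ^ 2 * deriv (deriv F) (R x)) := by
  have hpressure (a : ℝ) := ((hasDerivAt_rpow_const (p := γ) (.inl hpos.ne')).add
    ((hP _ hpos).const_mul a)).deriv
  have henergy : R x * deriv (deriv fun r => r ^ γ / (γ - 1) + (m - c) / m * F r) (R x)
      = γ * R x ^ (γ - 1) + (m - c) / m * (m * q (R x) * deriv h (R x) / R x) :=
    (mul_deriv_deriv_of_legendreDual_eq
      (contDiffOn_rpow_div_sub_one_add hFs γ _)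
      (fun r hr => legendreDual_rpow_div_sub_one_add hγ hF _ hr) hpos).trans (hpressure _)
  have hF'' : deriv (deriv F) (R x) = m * q (R x) * deriv h (R x) / R x / R x := by
    rw [eq_div_iff hpos.ne', mul_comm, mul_deriv_deriv_of_legendreDual_eq hFs hF.2 hpos,
      (hP _ hpos).deriv]
  have hgrad_pressure : grad (fun y => R y ^ γ + P (R y)) x i
      = (γ * R x ^ (γ - 1) + m * q (R x) * deriv h (R x) / R x) * grad R x i := by
    have hderiv := (hasDerivAt_rpow_const (p := γ) (.inl hpos.ne')).fun_add (hP _ hpos)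
    exact (pd_comp i hderiv.differentiableAt hR).trans (by rw [hderiv.deriv]; rfl)
  have hgrad_potential : grad (fun y => Φ (R y)) x i = deriv h (R x) / R x * grad R x i := by
    rw [← hΦ.2 _ hpos, mul_div_cancel_left₀ _ hpos.ne']
    exact pd_comp i (differentiableAt_of_contDiffOn_Ioi hΦ.1 hpos) hR
  have hrpow : R x ^ (γ - 1) = R x * R x ^ (γ - 2) := by
    rw [mul_comm, ← rpow_add_one hpos.ne']
    ring_nf
  rw [henergy, hgrad_pressure, hF'', hrpow, hV, Pi.add_apply, Pi.smul_apply, hgrad_potential,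
    smul_eq_mul]
  field_simp
  ring

lemma integral_pressure_damping_work (hγ : γ ≠ 1) (hm : m ≠ 0)
    (hP : ∀ r, 0 < r → HasDerivAt P (m * q r * deriv h r / r) r) (hΦ : IsViscousPotential h Φ)
    (hh : ContDiffOn ℝ ∞ h (Set.Ioi 0)) (hq : ContinuousOn q (Set.Ioi 0)) (hF : IsFeps P F)
    (hFs : ContDiffOn ℝ ∞ F (Set.Ioi 0)) (hR : SmoothPeriodic R) (hpos : ∀ x, 0 < R x)
    (hU : SmoothPeriodic U) (hV : V = fun x => U x + c • grad (fun y => Φ (R y)) x) :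
    (∫ x in unitBox d, ∑ i, V x i * (grad (fun y => R y ^ γ + P (R y)) x i + q (R x) * U x i))
        - ∫ x in unitBox d, ∑ i, U x i *
            (R x * deriv (deriv fun r => r ^ γ / (γ - 1) + (m - c) / m * F r) (R x) * grad R x i)
      = (∫ x in unitBox d, q (R x) * ∑ i, V x i ^ 2)
        + c * γ * (∫ x in unitBox d, deriv h (R x) * (∑ i, grad R x i ^ 2) * R x ^ (γ - 2))
        + c * ((m - c) / m) * (∫ x in unitBox d,
            deriv h (R x) * (∑ i, grad R x i ^ 2) * deriv (deriv F) (R x)) := by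
  have hcomp {G : ℝ → ℝ} (hG : ContDiffOn ℝ ∞ G (Set.Ioi 0)) : Continuous fun x => G (R x) :=
    (SmoothPeriodic.comp hG hR hpos).continuous
  have hVs : SmoothPeriodic V :=
    hV ▸ hU.add ((SmoothPeriodic.const c).smul (SmoothPeriodic.comp hΦ.1 hR hpos).grad)
  have hUc := hU.continuous
  have hVc := hVs.continuous
  have hqc : Continuous fun x => q (R x) := hq.comp_continuous hR.continuous hpos
  have hpc := (SmoothPeriodic.comp (contDiffOn_rpow_add_legendreDual hF hFs γ) hR hpos).grad
  have hgc := hR.grad.continuous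
  have hRc := hR.continuous
  have hec := hcomp (contDiffOn_deriv_Ioi (contDiffOn_deriv_Ioi
    (contDiffOn_rpow_div_sub_one_add hFs γ ((m - c) / m))))
  have hFc := hcomp (contDiffOn_deriv_Ioi (contDiffOn_deriv_Ioi hFs))
  have hhc := hcomp (contDiffOn_deriv_Ioi hh)
  have hrc := hcomp (contDiffOn_rpow_const_Ioi (γ - 2))
  have hwork := integrableOn_unitBox <| continuous_finsetSum Finset.univ fun i _ =>
    (hVs.apply i).continuous.fun_mul
      ((hpc.apply i).continuous.fun_add (hqc.fun_mul (hU.apply i).continuous))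
  have hdamping : IntegrableOn (fun x => q (R x) * ∑ i, V x i ^ 2) (unitBox d) :=
    integrableOn_unitBox (hqc.fun_mul (by fun_prop))
  simp only [← integral_const_mul]
  rw [← integral_sub hwork, add_assoc, ← integral_add, ← integral_add hdamping]
  · congr! 2 with x
    rw [← Finset.sum_sub_distrib]
    simp only [pressure_damping_work_eq hγ hm hP hΦ hF hFs (hR.differentiable x) (hpos x)
      (congrFun hV x), Finset.sum_add_distrib, ← Finset.mul_sum, ← Finset.sum_mul, add_assoc]
  all_goals refine integrableOn_unitBox ?_; fun_prop

end Pressure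

section EnergyBalance

variable {d : ℕ} {h q p Φ : ℝ → ℝ} {ν κ c t : ℝ} {I : Set ℝ} {ρ : ℝ → (Fin d → ℝ) → ℝ}
  {u : ℝ → (Fin d → ℝ) → Fin d → ℝ}

lemma IsQuantumNSSolution.hasDerivAt_effectiveKineticEnergy
    (hsol : IsQuantumNSSolution h q p ν κ I ρ u) (hI : IsOpen I) (ht : t ∈ I)
    (hh : ContDiffOn ℝ ∞ h (Set.Ioi 0)) (hΦ : IsViscousPotential h Φ)
    (hp : ContDiffOn ℝ ∞ p (Set.Ioi 0)) (hq : ContinuousOn q (Set.Ioi 0)) :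
    HasDerivAt
      (fun s => ∫ x in unitBox d, ρ s x * ((∑ i, effectiveVelocity c Φ ρ u s x i ^ 2) / 2))
      (-(∫ x in unitBox d, viscousPower (fun y => h (ρ t y)) (fun y => legendreDual h (ρ t y))
            (effectiveStrain ν κ c (u t) fun y => Φ (ρ t y)) (effectiveVelocity c Φ ρ u t) x)
        - ∫ x in unitBox d, ∑ i, effectiveVelocity c Φ ρ u t x i *
            (grad (fun y => p (ρ t y)) x i + q (ρ t x) * u t x i)) t := by
  have hρ := hsol.smooth_density
  have hu := hsol.smooth_velocity
  have hpos := hsol.density_pos t ht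
  have hv := SmoothPeriodicOn.effectiveVelocity (c := c) hI hρ hsol.density_pos hu hΦ
  have hη := SmoothPeriodic.comp hh (hρ.slice ht) hpos
  have hζ := SmoothPeriodic.comp (contDiffOn_legendreDual hh) (hρ.slice ht) hpos
  have hstrain := (hu.slice ht).effectiveStrain (ν := ν) (κ := κ) (c := c)
    (SmoothPeriodic.comp hΦ.1 (hρ.slice ht) hpos)
  have hforce := (hη.viscousForce hζ hstrain).continuous
  have hpc (i : Fin d) := ((SmoothPeriodic.comp hp (hρ.slice ht) hpos).grad.apply i).continuous
  have hqc : Continuous fun x => q (ρ t x) := hq.comp_continuous (hρ.slice ht).continuous hpos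
  have huc (i : Fin d) := ((hu.slice ht).apply i).continuous
  have hvc (i : Fin d) := ((hv.slice ht).apply i).continuous
  have hwork := continuous_finsetSum Finset.univ fun i _ =>
    (hvc i).fun_mul ((hpc i).fun_add (hqc.fun_mul (huc i)))
  convert hsol.mass.hasDerivAt_kineticEnergy hI ht hρ hu hv using 1
  rw [← integral_dot_viscousForce hη hζ hstrain (hv.slice ht), ← integral_sub
    (integrableOn_unitBox (by fun_prop)) (integrableOn_unitBox hwork)]
  congr! 2 with x
  rw [← Finset.sum_sub_distrib]
  exact Finset.sum_congr rfl fun i _ => by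
    rw [hsol.mul_materialDeriv_effectiveVelocity hI ht hh hΦ]; ring

lemma ConservesMass.hasDerivAt_capillaryEnergy (hmass : ConservesMass I ρ u) (hI : IsOpen I)
    (ht : t ∈ I) (hρ : SmoothPeriodicOn I ρ) (hu : SmoothPeriodicOn I u)
    (hpos : ∀ s ∈ I, ∀ x, 0 < ρ s x) (hΦ : IsViscousPotential h Φ)
    (hh : ContDiffOn ℝ ∞ h (Set.Ioi 0)) :
    HasDerivAt (fun s => ∫ x in unitBox d,
        2 * ∑ i, (deriv h (ρ s x) * grad (fun z => √(ρ s z)) x i) ^ 2)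
      (∫ x in unitBox d, viscousPower (fun y => h (ρ t y)) (fun y => legendreDual h (ρ t y))
        (fun y i j => jac (u t) y j i) (grad fun y => Φ (ρ t y)) x) t := by
  have hw := (SmoothPeriodicOn.comp hΦ.1 hρ hpos).grad hI
  have hkin := hmass.hasDerivAt_kineticEnergy hI ht hρ hu hw
  simp only [hmass.mul_materialDeriv_grad_viscousPotential hI ht hρ hu hpos hΦ hh, mul_neg,
    Finset.sum_neg_distrib, integral_neg] at hkin
  rw [integral_dot_viscousForce (SmoothPeriodic.comp hh (hρ.slice ht) (hpos t ht))
    (SmoothPeriodic.comp (contDiffOn_legendreDual hh) (hρ.slice ht) (hpos t ht))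
    (hu.slice ht).jac_transpose (hw.slice ht), neg_neg] at hkin
  refine hkin.congr_of_eventuallyEq ?_
  filter_upwards [hI.mem_nhds ht] with s hs
  simp only [two_mul_sum_sq_deriv_mul_grad_sqrt hΦ ((hρ.slice hs).differentiable _) (hpos s hs _)]

lemma integral_effectiveEnergy {e : ℝ → ℝ} {R : (Fin d → ℝ) → ℝ}
    {V : (Fin d → ℝ) → Fin d → ℝ} (K : ℝ) (hh : ContDiffOn ℝ ∞ h (Set.Ioi 0))
    (he : ContDiffOn ℝ ∞ e (Set.Ioi 0)) (hR : SmoothPeriodic R) (hpos : ∀ x, 0 < R x)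
    (hV : SmoothPeriodic V) :
    ∫ x in unitBox d, (R x * (∑ i, V x i ^ 2) / 2 + e (R x)
        + 2 * K * ∑ i, (deriv h (R x) * grad (fun y => √(R y)) x i) ^ 2)
      = (∫ x in unitBox d, R x * ((∑ i, V x i ^ 2) / 2)) + (∫ x in unitBox d, e (R x))
        + K * ∫ x in unitBox d, 2 * ∑ i, (deriv h (R x) * grad (fun y => √(R y)) x i) ^ 2 := by
  have hsqrt : ContDiffOn ℝ ∞ Real.sqrt (Set.Ioi 0) := fun r hr =>
    (contDiffAt_sqrt (Set.mem_Ioi.1 hr).ne').contDiffWithinAt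
  have hRc := hR.continuous
  have hVc := hV.continuous
  have hec := (SmoothPeriodic.comp he hR hpos).continuous
  have hhc := (SmoothPeriodic.comp (contDiffOn_deriv_Ioi hh) hR hpos).continuous
  have hsc := (SmoothPeriodic.comp hsqrt hR hpos).grad.continuous
  have henergy : IntegrableOn (fun x => e (R x)) (unitBox d) := integrableOn_unitBox hec
  rw [← integral_const_mul, ← integral_add _ henergy, ← integral_add]
  · exact integral_congr_ae (.of_forall fun x => by ring)
  · exact (integrableOn_unitBox (by fun_prop)).add henergy
  all_goals refine integrableOn_unitBox ?_; fun_prop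

end EnergyBalance

theorem statement9_general {d : ℕ} {h q P Φ F : ℝ → ℝ} {γ ν κ c m : ℝ} {I : Set ℝ}
    (hI : IsOpen I) (hγ : γ ≠ 1) (hm : m ≠ 0) (hh : ContDiffOn ℝ ∞ h (Set.Ioi 0))
    (hq : ContinuousOn q (Set.Ioi 0))
    (hP : ∀ r, 0 < r → HasDerivAt P (m * q r * deriv h r / r) r) (hΦ : IsViscousPotential h Φ)
    (hF : IsFeps P F) (hFs : ContDiffOn ℝ ∞ F (Set.Ioi 0))
    {ρ : ℝ → (Fin d → ℝ) → ℝ} {u v : ℝ → (Fin d → ℝ) → Fin d → ℝ}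
    (hsol : IsQuantumNSSolution h q (fun r => r ^ γ + P r) ν κ I ρ u)
    (hv : ∀ s y i, v s y i = u s y i + c * grad (fun z => Φ (ρ s z)) y i) {t : ℝ} (ht : t ∈ I) :
    HasDerivAt (fun s => ∫ x in unitBox d,
        (ρ s x * (∑ i, v s x i ^ 2) / 2 + ρ s x ^ γ / (γ - 1) + (m - c) / m * F (ρ s x)
          + 2 * (c ^ 2 - 2 * ν * c + κ ^ 2) *
            ∑ i, (deriv h (ρ s x) * grad (fun z => √(ρ s z)) x i) ^ 2))
      (-(c * ∫ x in unitBox d, h (ρ t x) * ∑ i, ∑ j, antiD (v t) x i j ^ 2)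
        - (2 * ν - c) * (∫ x in unitBox d,
            (h (ρ t x) * ∑ i, ∑ j, symD (v t) x i j ^ 2
              + legendreDual h (ρ t x) * dvg (v t) x ^ 2))
        - (∫ x in unitBox d, q (ρ t x) * ∑ i, v t x i ^ 2)
        - c * γ * (∫ x in unitBox d,
            deriv h (ρ t x) * (∑ i, grad (ρ t) x i ^ 2) * ρ t x ^ (γ - 2))
        - c * ((m - c) / m) * (∫ x in unitBox d,
            deriv h (ρ t x) * (∑ i, grad (ρ t) x i ^ 2) * deriv (deriv F) (ρ t x))
        - c * (c ^ 2 - 2 * ν * c + κ ^ 2) * (∫ x in unitBox d,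
            h (ρ t x) * ∑ i, ∑ j, hess (fun y => Φ (ρ t y)) x i j ^ 2)
        - c * (c ^ 2 - 2 * ν * c + κ ^ 2) * (∫ x in unitBox d,
            legendreDual h (ρ t x) * lap (fun y => Φ (ρ t y)) x ^ 2)) t := by
  obtain rfl : v = effectiveVelocity c Φ ρ u := funext fun s => funext fun y => funext (hv s y)
  have hρ := hsol.smooth_density
  have hu := hsol.smooth_velocity
  have hpos := hsol.density_pos
  have he := contDiffOn_rpow_div_sub_one_add hFs γ ((m - c) / m)
  have hp := contDiffOn_rpow_add_legendreDual hF hFs γ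
  have hviscous := integral_viscousPower_effectiveStrain_sub (ν := ν) (κ := κ) (c := c)
    (SmoothPeriodic.comp hh (hρ.slice ht) (hpos t ht))
    (SmoothPeriodic.comp (contDiffOn_legendreDual hh) (hρ.slice ht) (hpos t ht))
    (SmoothPeriodic.comp hΦ.1 (hρ.slice ht) (hpos t ht)) (hu.slice ht)
    (V := effectiveVelocity c Φ ρ u t) rfl
  have hpressure := integral_pressure_damping_work hγ hm hP hΦ hh hq hF hFs (hρ.slice ht)
    (hpos t ht) (hu.slice ht) (c := c) (V := effectiveVelocity c Φ ρ u t) rfl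
  have henergy := ((hsol.hasDerivAt_effectiveKineticEnergy hI ht hh hΦ hp hq (c := c)).add
    (hsol.mass.hasDerivAt_internalEnergy hI ht hρ hu hpos he)).add
    ((hsol.mass.hasDerivAt_capillaryEnergy hI ht hρ hu hpos hΦ hh).const_mul
      (c ^ 2 - 2 * ν * c + κ ^ 2))
  refine (henergy.congr_of_eventuallyEq ?_).congr_deriv ?_
  · filter_upwards [hI.mem_nhds ht] with s hs
    simpa only [Pi.add_apply, add_assoc] using integral_effectiveEnergy _ hh he (hρ.slice hs)
      (hpos s hs) ((SmoothPeriodicOn.effectiveVelocity hI hρ hpos hu hΦ).slice hs)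
  · linear_combination -hviscous - hpressure

lemma contDiffOn_hfun (ε γ : ℝ) : ContDiffOn ℝ ∞ (hfun ε γ) (Set.Ioi 0) :=
  (contDiffOn_id.add (contDiffOn_const.mul (contDiffOn_rpow_const_Ioi _))).add
    (contDiffOn_const.mul (contDiffOn_rpow_const_Ioi γ))

lemma continuousOn_ptil (ε : ℝ) : ContinuousOn (ptil ε) (Set.Ioi 0) :=
  continuousOn_const.mul
    ((contDiffOn_rpow_const_Ioi _).continuousOn.add (contDiffOn_rpow_const_Ioi _).continuousOn)

lemma muof_pos {ν κ : ℝ} (hκ : 0 < κ) (hν : 0 < ν) : 0 < muof ν κ :=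
  sub_pos.2 <| (sqrt_lt' hν).2 <| sub_lt_self _ <| pow_pos hκ 2

lemma IsQNSSol.isQuantumNSSolution {d : ℕ} {ε γ ν κ T : ℝ} {P : ℝ → ℝ}
    {ρ : ℝ → (Fin d → ℝ) → ℝ} {u : ℝ → (Fin d → ℝ) → Fin d → ℝ}
    (hsol : IsQNSSol d ε γ ν κ T P ρ u) :
    IsQuantumNSSolution (hfun ε γ) (ptil ε) (fun r => r ^ γ + P r) ν κ (Set.Ioo 0 T) ρ u := by
  obtain ⟨hρ, hu, hpos, hρ_per, hu_per, hmass, hmom⟩ := hsol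
  have hsub : Set.Ioo 0 T ×ˢ (Set.univ : Set (Fin d → ℝ)) ⊆ Set.Icc 0 T ×ˢ Set.univ :=
    Set.prod_mono_left Set.Ioo_subset_Icc_self
  exact ⟨⟨hρ.mono hsub, fun t _ => hρ_per t⟩, ⟨hu.mono hsub, fun t _ => hu_per t⟩,
    fun t _ => hpos t, hmass, hmom⟩

theorem statement9 (d : ℕ) (hd : 1 ≤ d) (ε γ ν κ T c : ℝ)
    (hε : 0 < ε) (hγ : 1 < γ) (hκ : 0 < κ) (hνκ : κ < ν) (hT : 0 < T)
    (hc0 : 0 < c) (hcμ : c < muof ν κ)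
    (P Φ F : ℝ → ℝ) (hP : IsPeps ε γ ν κ P) (hΦ : IsPhieps ε γ Φ)
    (hF : IsFeps P F) (hFsmooth : ContDiffOn ℝ (⊤ : ℕ∞) F (Set.Ioi 0))
    (ρ : ℝ → (Fin d → ℝ) → ℝ) (u : ℝ → (Fin d → ℝ) → (Fin d → ℝ))
    (hsol : IsQNSSol d ε γ ν κ T P ρ u)
    (v : ℝ → (Fin d → ℝ) → (Fin d → ℝ))
    (hv : ∀ s y i, v s y i = u s y i + c * grad (fun z => Φ (ρ s z)) y i) :
    ∀ t ∈ Set.Ioo 0 T,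
      HasDerivAt (fun s => ∫ x in unitBox d,
          (ρ s x * (∑ i, v s x i ^ 2) / 2 + ρ s x ^ γ / (γ - 1)
            + (muof ν κ - c) / muof ν κ * F (ρ s x)
            + 2 * (c ^ 2 - 2 * ν * c + κ ^ 2) *
              ∑ i, (deriv (hfun ε γ) (ρ s x) * grad (fun z => Real.sqrt (ρ s z)) x i) ^ 2))
        (-(c * ∫ x in unitBox d, hfun ε γ (ρ t x) * ∑ i, ∑ j, antiD (v t) x i j ^ 2)
          - (2 * ν - c) * (∫ x in unitBox d,
              (hfun ε γ (ρ t x) * ∑ i, ∑ j, symD (v t) x i j ^ 2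
                + gfun ε γ (ρ t x) * dvg (v t) x ^ 2))
          - (∫ x in unitBox d, ptil ε (ρ t x) * ∑ i, v t x i ^ 2)
          - c * γ * (∫ x in unitBox d,
              deriv (hfun ε γ) (ρ t x) * (∑ i, grad (ρ t) x i ^ 2) * ρ t x ^ (γ - 2))
          - c * ((muof ν κ - c) / muof ν κ) * (∫ x in unitBox d,
              deriv (hfun ε γ) (ρ t x) * (∑ i, grad (ρ t) x i ^ 2) * deriv (deriv F) (ρ t x))
          - c * (c ^ 2 - 2 * ν * c + κ ^ 2) * (∫ x in unitBox d,
              hfun ε γ (ρ t x) * ∑ i, ∑ j, hess (fun y => Φ (ρ t y)) x i j ^ 2)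
          - c * (c ^ 2 - 2 * ν * c + κ ^ 2) * (∫ x in unitBox d,
              gfun ε γ (ρ t x) * lap (fun y => Φ (ρ t y)) x ^ 2)) t := by
  intro t ht
  exact statement9_general isOpen_Ioo hγ.ne' (muof_pos hκ (hκ.trans hνκ)).ne'
    (contDiffOn_hfun ε γ) (continuousOn_ptil ε) hP hΦ hF hFsmooth hsol.isQuantumNSSolution hv ht

end
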